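/- Fix 0 < b ≤ a and t > 0. For m ≤ n and a weight function ω : {1,…,m}×{1,…,n} → [b², a²], let C(ω) := (√(ω(i,j))) ∈ ℝ^{m×n}, let A(ω) := [[0, C(ω)], [−C(ω)ᵀ, 0]] be the associated skew-symmetric matrix of size N = m+n, let Φ(t, A(ω)) be its weighted matching polynomial (times √t if N is odd), and let log Φ̃(t, A(ω)) := E log det(√t I_N + Y_{A(ω)}) with Y_{A(ω)} built from i.i.d. standard Gaussians. Then lim_{n→∞} sup_{m ≤ n} sup_{ω : {1,…,m}×{1,…,n} → [b²,a²]} (1/(m+n)) ( log Φ(t, A(ω)) − log Φ̃(t, A(ω)) ) = 0. -/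

import Mathlib

/-!
Write `N = m + n`, `Y = Y_A`, `f_s = log det (s + Y)` and `G = (s + Y)⁻¹`, and let `T_U` be the part
of `tr G` carried by the side `U` of size `m`.

The Godsil–Gutman identity gives `Φ(t, A) = E det (√t + Y) = E exp f_√t`; only the inequality `≤` is
needed (`PhiFull_le_integral_det`). Thus the claim is that `log E exp f_√t - E f_√t = o(N)`,
uniformly in the weights. Gaussian concentration is not strong enough at the shift `√t`: the bound
available for the squared gradient of `f_s` is `2 a² N / s²`, of the same order as `N` when `s` is
fixed. It is used instead at the larger shift `s' = √(δ n)`, where it yields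
`log E exp f_s' ≤ E f_s' + O(1/δ)` (`gaussian_concentration`, `logDet_concentration`).

The passage between the two shifts rests on the bipartite structure. The signature matrix of the
bipartition anticommutes with `Y`, hence the partial traces of `G` over the two sides differ by
exactly `(n - m) / s` (`partTrace_compl`). Therefore `f_s - (n - m) log s` has derivative
`2 T_U ≥ 0` in `s`.
* It increases with `s` (`logDet_mono`), which bounds `E exp f_√t` by a multiple of `E exp f_s'`.
* On the average it increases slowly: Gaussian integration by parts in the diagonal of
  `(s + Y) G = 1` (`stein_identity`) gives `b² E T_U² ≤ N (1 + a² / s²)`, so that `E T_U = O(√N)`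
  (`integral_partTrace_sq_le`), and the return from `s'` to `√t` costs at most
  `O(√N) √(δ n) = O(√δ) N` (`integral_logDet_increment`).

Altogether the gap divided by `N` is `O(1 / (δ n)) + O(√δ)` (`log_gap_le`); it remains to choose `δ`
small and then `n` large.
-/


open MeasureTheory ProbabilityTheory Matrix

/-- Total weighted `k`-matching of the weighted graph encoded by the
skew-symmetric matrix `A`. -/
noncomputable def phiW {N : ℕ} (A : Matrix (Fin N) (Fin N) ℝ) (k : ℕ) : ℝ :=
  ∑ M ∈ Finset.univ.filter
      (fun M : Finset (Fin N × Fin N) =>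
        ((∀ p ∈ M, p.1 < p.2) ∧
          ∀ p ∈ M, ∀ q ∈ M, p ≠ q →
            p.1 ≠ q.1 ∧ p.1 ≠ q.2 ∧ p.2 ≠ q.1 ∧ p.2 ≠ q.2) ∧ M.card = k),
    ∏ p ∈ M, (A p.1 p.2) ^ 2

/-- The weighted matching polynomial `Φ(t, A)`. -/
noncomputable def PhiW {N : ℕ} (A : Matrix (Fin N) (Fin N) ℝ) (t : ℝ) : ℝ :=
  ∑ k ∈ Finset.range (N / 2 + 1), phiW A k * t ^ (N / 2 - k)

/-- `Φ(t,A)`, multiplied by `√t` when `N` is odd. -/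
noncomputable def PhiFull {N : ℕ} (A : Matrix (Fin N) (Fin N) ℝ) (t : ℝ) : ℝ :=
  (if Even N then 1 else Real.sqrt t) * PhiW A t

/-- Index type of the strictly upper-triangular positions. -/
abbrev PairIdx (N : ℕ) := {p : Fin N × Fin N // p.1 < p.2}

/-- The canonical product of standard Gaussian measures, one for each edge slot. -/
noncomputable def gaussPi (N : ℕ) : Measure (PairIdx N → ℝ) :=
  Measure.pi fun _ => gaussianReal 0 1

/-- The sample `Y_A(ξ)` of the random skew-symmetric matrix `Y_A`. -/
noncomputable def sampleY {N : ℕ} (A : Matrix (Fin N) (Fin N) ℝ)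
    (ξ : PairIdx N → ℝ) : Matrix (Fin N) (Fin N) ℝ :=
  Matrix.of fun i j =>
    if h : i < j then A i j * ξ ⟨(i, j), h⟩
    else if h : j < i then A i j * ξ ⟨(j, i), h⟩
    else 0

/-- `log Φ̃(t, A) = E log det(√t I_N + Y_A)` for i.i.d. standard Gaussian entries. -/
noncomputable def logPhiTilde {N : ℕ} (t : ℝ) (A : Matrix (Fin N) (Fin N) ℝ) : ℝ :=
  ∫ ξ, Real.log ((Real.sqrt t • (1 : Matrix (Fin N) (Fin N) ℝ) + sampleY A ξ).det) ∂(gaussPi N)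

/-- The constant `C₁ = -(1/√(2π)) ∫ log(x²) e^{-x²/2} dx`. -/
noncomputable def C1 : ℝ :=
  -(Real.sqrt (2 * Real.pi))⁻¹ * ∫ x : ℝ, Real.log (x ^ 2) * Real.exp (-x ^ 2 / 2)

/-- The skew-symmetric matrix of the weighted complete bipartite graph `K_{m,n,ω}`,
`A(ω) = [[0, C(ω)], [-C(ω)ᵀ, 0]]` with `C(ω)_{ij} = √(ω(i,j))`, reindexed to
`Fin (m + n)`. -/
noncomputable def bipartiteSkew {m n : ℕ} (w : Fin m → Fin n → ℝ) :
    Matrix (Fin (m + n)) (Fin (m + n)) ℝ :=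
  Matrix.reindex finSumFinEquiv finSumFinEquiv
    (Matrix.fromBlocks 0 (Matrix.of fun i j => Real.sqrt (w i j))
      (-(Matrix.of fun i j => Real.sqrt (w i j))ᵀ) 0)

/-! ### Resolvents of skew-symmetric matrices, derivatives of determinants and inverses -/

section MatrixFacts
variable {n : Type*} [Fintype n]

lemma skew_dotProduct_mulVec {S : Matrix n n ℝ} (hS : Sᵀ = -S) (v : n → ℝ) :
    v ⬝ᵥ (S *ᵥ v) = 0 := by
  have h : v ⬝ᵥ (S *ᵥ v) = -(v ⬝ᵥ (S *ᵥ v)) := by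
    conv_lhs => rw [dotProduct_mulVec, ← mulVec_transpose, hS, neg_mulVec, neg_dotProduct,
      dotProduct_comm]
  linarith

variable [DecidableEq n]

lemma isUnit_det_shift {S : Matrix n n ℝ} (hS : Sᵀ = -S) {s : ℝ} (hs : 0 < s) :
    IsUnit (s • (1 : Matrix n n ℝ) + S).det := by
  rw [isUnit_iff_ne_zero]
  intro h0
  obtain ⟨v, hv, h⟩ := Matrix.exists_mulVec_eq_zero_iff.2 h0
  have h1 : v ⬝ᵥ ((s • (1 : Matrix n n ℝ) + S) *ᵥ v) = s * (v ⬝ᵥ v) := by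
    rw [add_mulVec, dotProduct_add, skew_dotProduct_mulVec hS, smul_mulVec, one_mulVec,
      dotProduct_smul, smul_eq_mul, add_zero]
  rw [h, dotProduct_zero] at h1
  have : v ⬝ᵥ v = 0 := by
    rcases mul_eq_zero.1 h1.symm with h | h
    · exact absurd h hs.ne'
    · exact h
  exact hv (dotProduct_self_eq_zero.1 this)

/-- The resolvent `G = (s + S)⁻¹` of a skew-symmetric matrix satisfies `G + Gᵀ = 2 s Gᵀ G`; this is
its diagonal. -/
lemma resolvent_diag {S : Matrix n n ℝ} (hS : Sᵀ = -S) {s : ℝ} (hs : 0 < s) (i : n) :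
    (s • (1 : Matrix n n ℝ) + S)⁻¹ i i = s * ∑ j, ((s • (1 : Matrix n n ℝ) + S)⁻¹ j i) ^ 2 := by
  have hu := isUnit_det_shift hS hs
  set M := s • (1 : Matrix n n ℝ) + S with hM
  have h1 : Mᵀ + M = (2 * s) • (1 : Matrix n n ℝ) := by
    rw [hM, transpose_add, transpose_smul, transpose_one, hS]
    module
  have h2 : M⁻¹ + (M⁻¹)ᵀ = (2 * s) • ((M⁻¹)ᵀ * M⁻¹) := by
    have e1 : (M⁻¹)ᵀ * Mᵀ = 1 := by
      rw [← transpose_mul, mul_nonsing_inv _ hu, transpose_one]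
    have e2 : M * M⁻¹ = 1 := mul_nonsing_inv _ hu
    calc M⁻¹ + (M⁻¹)ᵀ = ((M⁻¹)ᵀ * Mᵀ) * M⁻¹ + (M⁻¹)ᵀ * (M * M⁻¹) := by
          rw [e1, e2, Matrix.one_mul, Matrix.mul_one]
      _ = (M⁻¹)ᵀ * (Mᵀ + M) * M⁻¹ := by
          noncomm_ring
      _ = _ := by
          rw [h1, Matrix.mul_smul, Matrix.mul_one, Matrix.smul_mul]
  have h3 := congrFun (congrFun h2 i) i
  simp only [Matrix.add_apply, Matrix.transpose_apply, Matrix.smul_apply, Matrix.mul_apply,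
    smul_eq_mul] at h3
  simp only [sq]
  linarith

lemma resolvent_diag_nonneg {S : Matrix n n ℝ} (hS : Sᵀ = -S) {s : ℝ} (hs : 0 < s) (i : n) :
    0 ≤ (s • (1 : Matrix n n ℝ) + S)⁻¹ i i := by
  rw [resolvent_diag hS hs]
  positivity

lemma resolvent_diag_le {S : Matrix n n ℝ} (hS : Sᵀ = -S) {s : ℝ} (hs : 0 < s) (i : n) :
    (s • (1 : Matrix n n ℝ) + S)⁻¹ i i ≤ 1 / s := by
  have h := resolvent_diag hS hs i
  have h0 := resolvent_diag_nonneg hS hs i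
  have h1 : ((s • (1 : Matrix n n ℝ) + S)⁻¹ i i) ^ 2 ≤
      ∑ j, ((s • (1 : Matrix n n ℝ) + S)⁻¹ j i) ^ 2 :=
    Finset.single_le_sum (f := fun j => ((s • (1 : Matrix n n ℝ) + S)⁻¹ j i) ^ 2)
      (fun _ _ => sq_nonneg _) (Finset.mem_univ i)
  set g := (s • (1 : Matrix n n ℝ) + S)⁻¹ i i
  rw [le_div_iff₀ hs]
  have h2 : s * g ^ 2 ≤ g := by
    conv_rhs => rw [h]
    gcongr
  by_contra hc
  push Not at hc
  have : 0 < g := by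
    rcases h0.lt_or_eq with h | h
    · exact h
    · rw [← h] at hc; norm_num at hc
  nlinarith

lemma resolvent_col_sq_le {S : Matrix n n ℝ} (hS : Sᵀ = -S) {s : ℝ} (hs : 0 < s) (i : n) :
    ∑ j, ((s • (1 : Matrix n n ℝ) + S)⁻¹ j i) ^ 2 ≤ 1 / s ^ 2 := by
  have h := resolvent_diag hS hs i
  have h1 := resolvent_diag_le hS hs i
  rw [h, le_div_iff₀ hs] at h1
  rw [le_div_iff₀ (by positivity)]
  linarith

lemma resolvent_abs_le {S : Matrix n n ℝ} (hS : Sᵀ = -S) {s : ℝ} (hs : 0 < s) (j i : n) :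
    |(s • (1 : Matrix n n ℝ) + S)⁻¹ j i| ≤ 1 / s := by
  have h1 : ((s • (1 : Matrix n n ℝ) + S)⁻¹ j i) ^ 2 ≤
      ∑ j, ((s • (1 : Matrix n n ℝ) + S)⁻¹ j i) ^ 2 :=
    Finset.single_le_sum (f := fun j => ((s • (1 : Matrix n n ℝ) + S)⁻¹ j i) ^ 2)
      (fun _ _ => sq_nonneg _) (Finset.mem_univ j)
  apply abs_le_of_sq_le_sq _ (by positivity)
  rw [div_pow, one_pow]
  exact h1.trans (resolvent_col_sq_le hS hs i)

lemma resolvent_sq_sum_le {S : Matrix n n ℝ} (hS : Sᵀ = -S) {s : ℝ} (hs : 0 < s) :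
    ∑ i, ∑ j, ((s • (1 : Matrix n n ℝ) + S)⁻¹ j i) ^ 2 ≤ Fintype.card n / s ^ 2 := by
  calc _ ≤ ∑ i : n, 1 / s ^ 2 := Finset.sum_le_sum fun i _ => resolvent_col_sq_le hS hs i
    _ = _ := by rw [Finset.sum_const, Finset.card_univ, nsmul_eq_mul]; ring

/-- If the signature `J` anticommutes with `S`, then `tr (J (s + S)⁻¹) = tr J / s`. -/
lemma trace_signature_resolvent {S J : Matrix n n ℝ} (hS : Sᵀ = -S) (hJ : J * S = -(S * J))
    {s : ℝ} (hs : 0 < s) :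
    s * (J * (s • (1 : Matrix n n ℝ) + S)⁻¹).trace = J.trace := by
  have hu := isUnit_det_shift hS hs
  set M := s • (1 : Matrix n n ℝ) + S with hM
  have e1 : s • M⁻¹ + S * M⁻¹ = 1 := by
    rw [← mul_nonsing_inv _ hu]
    conv_rhs => rw [hM, Matrix.add_mul, Matrix.smul_mul, Matrix.one_mul]
  have e2 : s • M⁻¹ + M⁻¹ * S = 1 := by
    rw [← nonsing_inv_mul _ hu]
    conv_rhs => rw [hM, Matrix.mul_add, Matrix.mul_smul, Matrix.mul_one]
  have hcomm : S * M⁻¹ = M⁻¹ * S := add_left_cancel (e1.trans e2.symm)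
  have h0 : (J * (S * M⁻¹)).trace = 0 := by
    have : (J * (S * M⁻¹)).trace = -(J * (S * M⁻¹)).trace := by
      conv_lhs => rw [← Matrix.mul_assoc, hJ, Matrix.neg_mul, trace_neg, Matrix.mul_assoc,
        trace_mul_comm, Matrix.mul_assoc, ← hcomm]
    linarith
  have := congrArg (fun X => (J * X).trace) e1
  simp only [Matrix.mul_add, trace_add, Matrix.mul_smul, trace_smul, h0, Matrix.mul_one,
    smul_eq_mul, add_zero] at this
  exact this

/-- **Jacobi's formula** along a differentiable curve of matrices. -/
lemma hasDerivAt_det {M : ℝ → Matrix n n ℝ} {M' : Matrix n n ℝ} {x : ℝ}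
    (hM : ∀ i j, HasDerivAt (fun y => M y i j) (M' i j) x) :
    HasDerivAt (fun y => (M y).det) ((adjugate (M x) * M').trace) x := by
  have h1 : HasDerivAt (fun y => (M y).det)
      (∑ σ : Equiv.Perm n, ((Equiv.Perm.sign σ : ℤ) : ℝ) *
        ∑ i, (∏ j ∈ Finset.univ.erase i, M x (σ j) j) • M' (σ i) i) x := by
    simp only [Matrix.det_apply']
    refine HasDerivAt.fun_sum fun σ _ => HasDerivAt.const_mul _ ?_
    exact HasDerivAt.fun_finsetProd fun i _ => hM (σ i) i
  convert h1 using 1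
  have h2 : (adjugate (M x) * M').trace = ∑ i, ((M x).updateCol i (fun k => M' k i)).det := by
    simp only [Matrix.trace, Matrix.diag_apply]
    refine Finset.sum_congr rfl fun i _ => ?_
    rw [← cramer_apply, cramer_eq_adjugate_mulVec]
    rfl
  rw [h2]
  simp only [Matrix.det_apply', Finset.mul_sum]
  rw [Finset.sum_comm]
  refine Finset.sum_congr rfl fun σ _ => Finset.sum_congr rfl fun i _ => ?_
  congr 1
  rw [← Finset.mul_prod_erase _ _ (Finset.mem_univ i), updateCol_self, smul_eq_mul, mul_comm]
  congr 1
  refine Finset.prod_congr rfl fun j hj => ?_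
  rw [updateCol_ne (Finset.ne_of_mem_erase hj)]

lemma hasDerivAt_log_det {M : ℝ → Matrix n n ℝ} {M' : Matrix n n ℝ} {x : ℝ}
    (hM : ∀ i j, HasDerivAt (fun y => M y i j) (M' i j) x) (hu : IsUnit (M x).det) :
    HasDerivAt (fun y => Real.log (M y).det) (((M x)⁻¹ * M').trace) x := by
  convert (hasDerivAt_det hM).log hu.ne_zero using 1
  rw [Matrix.inv_def, Ring.inverse_eq_inv', Matrix.smul_mul, trace_smul, smul_eq_mul]
  field_simp

/-- The derivative of `M⁻¹` along a curve is `-M⁻¹ M' M⁻¹`, entry by entry. -/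
lemma hasDerivAt_inv_entry {M : ℝ → Matrix n n ℝ} {M' : Matrix n n ℝ} {x : ℝ}
    (hM : ∀ i j, HasDerivAt (fun y => M y i j) (M' i j) x) (hu : IsUnit (M x).det) (i j : n) :
    HasDerivAt (fun y => (M y)⁻¹ i j) (-((M x)⁻¹ * M' * (M x)⁻¹) i j) x := by
  have hdet := hasDerivAt_det hM
  -- the entries of the inverse are differentiable, being quotients of determinants
  have hdiff : ∀ i j, DifferentiableAt ℝ (fun y => (M y)⁻¹ i j) x := by
    intro i j
    have : (fun y => (M y)⁻¹ i j) =
        fun y => ((M y).det)⁻¹ * ((M y).updateRow j (Pi.single i 1)).det := by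
      funext y
      rw [Matrix.inv_def, Ring.inverse_eq_inv', Matrix.smul_apply, adjugate_apply, smul_eq_mul]
    rw [this]
    refine (hdet.differentiableAt.inv hu.ne_zero).mul ?_
    refine (hasDerivAt_det (M' := M'.updateRow j 0) fun k l => ?_).differentiableAt
    by_cases hk : k = j
    · subst hk
      simpa using hasDerivAt_const x _
    · simpa [updateRow_ne hk] using hM k l
  let D : Matrix n n ℝ := Matrix.of fun i j => deriv (fun y => (M y)⁻¹ i j) x
  have hD : ∀ i j, HasDerivAt (fun y => (M y)⁻¹ i j) (D i j) x := fun i j => (hdiff i j).hasDerivAt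
  -- differentiating `M⁻¹ M = 1` determines the derivative
  have h1 : D * M x + (M x)⁻¹ * M' = 0 := by
    ext k l
    have e1 : HasDerivAt (fun y => ((M y)⁻¹ * M y) k l)
        (∑ r, (D k r * M x r l + (M x)⁻¹ k r * M' r l)) x := by
      simp only [Matrix.mul_apply]
      exact HasDerivAt.fun_sum fun r _ => (hD k r).mul (hM r l)
    have e2 : (fun y => ((M y)⁻¹ * M y) k l) =ᶠ[nhds x] fun _ => (1 : Matrix n n ℝ) k l := by
      filter_upwards [hdet.continuousAt.eventually_ne hu.ne_zero] with y hy
      rw [nonsing_inv_mul _ (isUnit_iff_ne_zero.2 hy)]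
    have e3 := (e1.congr_of_eventuallyEq e2.symm).unique (hasDerivAt_const x _)
    simpa [Matrix.add_apply, Matrix.mul_apply, Finset.sum_add_distrib] using e3
  have h2 : D = -((M x)⁻¹ * M' * (M x)⁻¹) := by
    have := congrArg (fun X => X * (M x)⁻¹) h1
    simp only [Matrix.add_mul, Matrix.zero_mul, Matrix.mul_assoc, mul_nonsing_inv _ hu,
      Matrix.mul_one] at this
    rw [Matrix.mul_assoc]
    exact eq_neg_of_add_eq_zero_left this
  have := hD i j
  rw [h2] at this
  exact this

end MatrixFacts

/-! ### The standard Gaussian measure: rotation invariance and integration by parts -/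

section Gauss
variable {ι : Type*} [Fintype ι]

/-- The standard Gaussian measure on `ℝ^ι`. -/
noncomputable abbrev stdG (ι : Type*) [Fintype ι] : Measure (ι → ℝ) :=
  Measure.pi fun _ => gaussianReal 0 1

instance isGaussian_stdG : IsGaussian (stdG ι) := by
  have h : iIndepFun (fun (i : ι) (x : ι → ℝ) => x i) (stdG ι) :=
    iIndepFun_pi (X := fun _ x => x) fun _ => aemeasurable_id
  have h2 := h.hasGaussianLaw (fun i => ⟨by
    rw [(measurePreserving_eval (fun _ : ι => gaussianReal 0 1) i).map_eq]
    infer_instance⟩)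
  have := h2.isGaussian_map
  rwa [show (fun ω : ι → ℝ => fun i => ω i) = id from rfl, Measure.map_id] at this

lemma integral_comp_eval_stdG (i : ι) (f : ℝ → ℝ) (hf : Measurable f) :
    ∫ x, f (x i) ∂(stdG ι) = ∫ y, f y ∂(gaussianReal 0 1) := by
  rw [← (measurePreserving_eval (fun _ : ι => gaussianReal 0 1) i).map_eq,
    integral_map (measurable_pi_apply i).aemeasurable hf.aestronglyMeasurable]

/-- A pair of independent standard Gaussian vectors is invariant under rotations. -/
lemma stdG_rotation (θ : ℝ) :
    ((stdG ι).prod (stdG ι)).map (ContinuousLinearMap.rotation θ) = (stdG ι).prod (stdG ι) := by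
  apply IsGaussian.map_rotation_eq_self
  have hInt : Integrable (id : (ι → ℝ) → ι → ℝ) (stdG ι) := IsGaussian.integrable_id
  ext i
  rw [eval_integral (fun i => hInt.eval i)]
  simp only [id]
  rw [integral_comp_eval_stdG i (fun y => y) measurable_id, integral_id_gaussianReal]
  rfl

/-- Moment generating function of the standard Gaussian vector, as a lower Lebesgue integral. -/
lemma lintegral_exp_linear_stdG (c : ι → ℝ) :
    ∫⁻ y, ENNReal.ofReal (Real.exp (∑ i, c i * y i)) ∂(stdG ι) =
      ENNReal.ofReal (Real.exp ((∑ i, c i ^ 2) / 2)) := by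
  simp only [Real.exp_sum]
  rw [← ofReal_integral_eq_lintegral_ofReal]
  · congr 1
    rw [integral_fintype_prod_eq_prod (f := fun i y => Real.exp (c i * y)), Finset.sum_div,
      Real.exp_sum]
    refine Finset.prod_congr rfl fun i _ => ?_
    have := congrFun (mgf_id_gaussianReal (μ := 0) (v := 1)) (c i)
    simpa [mgf] using this
  · refine Integrable.fintype_prod (f := fun i y => Real.exp (c i * y)) fun i => ?_
    exact integrable_exp_mul_gaussianReal (c i)
  · exact Filter.Eventually.of_forall fun y => Finset.prod_nonneg fun i _ => (Real.exp_pos _).le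

/-- Gaussian integration by parts in one variable. -/
lemma stein_one {F F' : ℝ → ℝ} (hF : ∀ x, HasDerivAt F (F' x) x) {K K' : ℝ}
    (hK : ∀ x, |F x| ≤ K) (hK' : ∀ x, |F' x| ≤ K') (hm : Measurable F') :
    ∫ x, x * F x ∂(gaussianReal 0 1) = ∫ x, F' x ∂(gaussianReal 0 1) := by
  have hpdf : gaussianPDFReal 0 1 =
      fun x => (Real.sqrt (2 * Real.pi))⁻¹ * Real.exp (-(1 / 2) * x ^ 2) := by
    funext x
    simp only [gaussianPDFReal, NNReal.coe_one, mul_one, sub_zero]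
    congr 2
    ring
  have hp : ∀ x, HasDerivAt (gaussianPDFReal 0 1) (-x * gaussianPDFReal 0 1 x) x := by
    intro x
    rw [hpdf]
    have h : HasDerivAt (fun x : ℝ => -(1 / 2) * x ^ 2) (-(1 / 2) * (2 * x)) x := by
      simpa using (hasDerivAt_pow 2 x).const_mul (-(1 / 2) : ℝ)
    refine ((h.exp).const_mul (Real.sqrt (2 * Real.pi))⁻¹).congr_deriv ?_
    ring
  have hFc : Continuous F := continuous_iff_continuousAt.2 fun x => (hF x).continuousAt
  have i1 : Integrable (fun x : ℝ => gaussianPDFReal 0 1 x) := integrable_gaussianPDFReal 0 1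
  have i2 : Integrable (fun x : ℝ => x * gaussianPDFReal 0 1 x) := by
    have : Integrable (fun x : ℝ => x) (gaussianReal 0 1) :=
      IsGaussian.integrable_id (μ := gaussianReal 0 1)
    rw [gaussianReal_of_var_ne_zero 0 one_ne_zero, integrable_withDensity_iff_integrable_smul'
      (measurable_gaussianPDF 0 1) (Filter.Eventually.of_forall fun _ => gaussianPDF_lt_top)] at this
    refine this.congr (Filter.Eventually.of_forall fun x => ?_)
    simp [gaussianPDF, ENNReal.toReal_ofReal (gaussianPDFReal_nonneg 0 1 x), mul_comm]
  have key := integral_mul_deriv_eq_deriv_mul_of_integrable (u := F) (v := gaussianPDFReal 0 1)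
    (u' := F') (v' := fun x => -x * gaussianPDFReal 0 1 x) (fun x _ => hF x) (fun x _ => hp x)
    ?_ ?_ ?_
  · rw [integral_gaussianReal_eq_integral_smul one_ne_zero,
      integral_gaussianReal_eq_integral_smul one_ne_zero]
    simp only [smul_eq_mul]
    have e1 : ∫ x, gaussianPDFReal 0 1 x * (x * F x) = -∫ x, F x * (-x * gaussianPDFReal 0 1 x) := by
      rw [← integral_neg]; congr 1; funext x; ring
    rw [e1, key, neg_neg]
    congr 1; funext x; ring
  · have := i2.neg.bdd_mul (c := K) hFc.aestronglyMeasurable (Filter.Eventually.of_forall hK)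
    refine this.congr (Filter.Eventually.of_forall fun x => ?_)
    simp
  · exact i1.bdd_mul (c := K') hm.aestronglyMeasurable (Filter.Eventually.of_forall hK')
  · exact i1.bdd_mul (c := K) hFc.aestronglyMeasurable (Filter.Eventually.of_forall hK)

/-- Resampling one coordinate preserves the Gaussian measure. -/
lemma measurePreserving_resample [DecidableEq ι] (p : ι) :
    MeasurePreserving (fun z : (ι → ℝ) × ℝ => Function.update z.1 p z.2)
      ((stdG ι).prod (gaussianReal 0 1)) (stdG ι) := by
  have hm : Measurable (fun z : (ι → ℝ) × ℝ => Function.update z.1 p z.2) := by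
    refine measurable_pi_iff.2 fun i => ?_
    by_cases h : i = p
    · subst h; simpa using measurable_snd
    · simp only [Function.update_of_ne h]; fun_prop
  refine ⟨hm, ?_⟩
  refine (Measure.pi_eq fun s hs => ?_).symm
  rw [Measure.map_apply hm (MeasurableSet.univ_pi hs)]
  have : (fun z : (ι → ℝ) × ℝ => Function.update z.1 p z.2) ⁻¹' (Set.univ.pi s) =
      (Set.univ.pi (Function.update s p Set.univ)) ×ˢ (s p) := by
    ext z
    simp only [Set.mem_preimage, Set.mem_pi, Set.mem_univ, true_implies, Set.mem_prod]
    constructor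
    · intro h
      refine ⟨fun i => ?_, by simpa using h p⟩
      by_cases hi : i = p
      · subst hi; simp
      · simpa [Function.update_of_ne hi] using h i
    · rintro ⟨h1, h2⟩ i
      by_cases hi : i = p
      · subst hi; simpa using h2
      · simpa [Function.update_of_ne hi] using h1 i
  rw [this, Measure.prod_prod, Measure.pi_pi,
    ← Finset.mul_prod_erase Finset.univ _ (Finset.mem_univ p),
    ← Finset.mul_prod_erase Finset.univ _ (Finset.mem_univ p)]
  simp only [Function.update_self, measure_univ, one_mul]
  rw [mul_comm]
  congr 1
  refine Finset.prod_congr rfl fun j hj => ?_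
  rw [Function.update_of_ne (Finset.ne_of_mem_erase hj)]

/-- Gaussian integration by parts in the coordinate `p`. -/
lemma stein_coord [DecidableEq ι] (p : ι) {F F' : (ι → ℝ) → ℝ}
    (hF : ∀ x y, HasDerivAt (fun y => F (Function.update x p y)) (F' (Function.update x p y)) y)
    {K K' : ℝ} (hK : ∀ x, |F x| ≤ K) (hK' : ∀ x, |F' x| ≤ K') (hm : Measurable F)
    (hm' : Measurable F') :
    ∫ x, x p * F x ∂(stdG ι) = ∫ x, F' x ∂(stdG ι) := by
  have mp := measurePreserving_resample (ι := ι) p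
  have i1 : Integrable (fun x : ι → ℝ => x p * F x) (stdG ι) := by
    have : Integrable (fun x : ι → ℝ => x p) (stdG ι) :=
      (IsGaussian.integrable_id (μ := stdG ι)).eval p
    exact this.mul_bdd (c := K) hm.aestronglyMeasurable (Filter.Eventually.of_forall hK)
  have i2 : Integrable F' (stdG ι) :=
    Integrable.of_bound hm'.aestronglyMeasurable K' (Filter.Eventually.of_forall hK')
  have fub : ∀ H : (ι → ℝ) → ℝ, Integrable H (stdG ι) →
      ∫ x, H x ∂(stdG ι) =
        ∫ x, ∫ y, H (Function.update x p y) ∂(gaussianReal 0 1) ∂(stdG ι) := by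
    intro H hH
    have h1 : Integrable (fun z : (ι → ℝ) × ℝ => H (Function.update z.1 p z.2))
        ((stdG ι).prod (gaussianReal 0 1)) := mp.integrable_comp_of_integrable hH
    rw [← integral_prod (fun z : (ι → ℝ) × ℝ => H (Function.update z.1 p z.2)) h1]
    conv_lhs => rw [← mp.map_eq]
    rw [integral_map mp.aemeasurable (by rw [mp.map_eq]; exact hH.aestronglyMeasurable)]
  rw [fub _ i1, fub _ i2]
  refine integral_congr_ae (Filter.Eventually.of_forall fun x => ?_)
  simp only [Function.update_self]
  refine stein_one (hF x) (fun y => hK _) (fun y => hK' _) ?_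
  exact hm'.comp (measurable_update x)

end Gauss

/-! ### Gaussian concentration -/

section Conc
variable {ι : Type*} [Fintype ι]

/-- Jensen's inequality for `exp` and the uniform average over `(0, π/2]`. -/
lemma exp_integral_le_average {h : ℝ → ℝ} (hh : Continuous h) :
    ENNReal.ofReal (Real.exp (∫ θ in (0)..(Real.pi / 2), h θ)) ≤
      ENNReal.ofReal (2 / Real.pi) *
        ∫⁻ θ in Set.Ioc 0 (Real.pi / 2), ENNReal.ofReal (Real.exp (Real.pi / 2 * h θ)) := by
  have hpi := Real.pi_pos
  have hvol : volume.real (Set.Ioc 0 (Real.pi / 2)) = Real.pi / 2 := by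
    rw [Real.volume_real_Ioc_of_le (by positivity), sub_zero]
  have hInt : ∀ k : ℝ → ℝ, Continuous k → IntegrableOn k (Set.Ioc 0 (Real.pi / 2)) := fun k hk =>
    (hk.integrableOn_Icc).mono_set Set.Ioc_subset_Icc_self
  have hc : Continuous (fun θ => Real.pi / 2 * h θ) := by fun_prop
  have j := convexOn_exp.map_set_average_le (μ := volume) (t := Set.Ioc 0 (Real.pi / 2))
    (f := fun θ => Real.pi / 2 * h θ) Real.continuous_exp.continuousOn isClosed_univ
    (by simp [hpi]) (by simp) (by simp) (hInt _ hc) (hInt _ (Real.continuous_exp.comp hc))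
  rw [setAverage_eq, setAverage_eq, hvol, integral_const_mul, smul_eq_mul, smul_eq_mul,
    ← mul_assoc, inv_mul_cancel₀ (by positivity), one_mul] at j
  rw [intervalIntegral.integral_of_le (by positivity)]
  refine (ENNReal.ofReal_le_ofReal j).trans_eq ?_
  rw [ENNReal.ofReal_mul (by positivity), inv_div,
    ofReal_integral_eq_lintegral_ofReal (hInt (fun θ => Real.exp (Real.pi / 2 * h θ)) (by fun_prop))
      (Filter.Eventually.of_forall fun θ => (Real.exp_pos _).le)]

/-- Along the quarter circle from `z.1` to `z.2`, the increment of `f` is the integral of the inner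
product of the gradient `g` with the velocity; Jensen's inequality then moves `exp` inside. -/
lemma exp_increment_le {f : (ι → ℝ) → ℝ} {g : (ι → ℝ) → ι → ℝ} (hg : Continuous g)
    (hf : ∀ (c : ℝ → ι → ℝ) (c' : ι → ℝ) (θ : ℝ),
      (∀ p, HasDerivAt (fun y => c y p) (c' p) θ) →
        HasDerivAt (fun y => f (c y)) (∑ p, g (c θ) p * c' p) θ) (z : (ι → ℝ) × (ι → ℝ)) :
    ENNReal.ofReal (Real.exp (f z.2 - f z.1)) ≤
      ENNReal.ofReal (2 / Real.pi) * ∫⁻ θ in Set.Ioc 0 (Real.pi / 2),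
        ENNReal.ofReal (Real.exp (Real.pi / 2 * ∑ p, g (ContinuousLinearMap.rotation θ z).1 p *
          (ContinuousLinearMap.rotation θ z).2 p)) := by
  have hr : Continuous fun θ : ℝ => ContinuousLinearMap.rotation θ z := by
    simp only [ContinuousLinearMap.rotation_apply]
    fun_prop
  have hkz : Continuous fun θ : ℝ => ∑ p, g (ContinuousLinearMap.rotation θ z).1 p *
          (ContinuousLinearMap.rotation θ z).2 p := by
    fun_prop
  have hd : ∀ θ : ℝ, HasDerivAt (fun y : ℝ => f ((ContinuousLinearMap.rotation y z).1))
      (∑ p, g (ContinuousLinearMap.rotation θ z).1 p *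
          (ContinuousLinearMap.rotation θ z).2 p) θ := by
    intro θ
    refine hf (fun y => (ContinuousLinearMap.rotation y z).1)
      ((ContinuousLinearMap.rotation θ z).2) θ fun p => ?_
    simp only [ContinuousLinearMap.rotation_apply, Pi.add_apply, Pi.smul_apply, smul_eq_mul]
    exact ((Real.hasDerivAt_cos θ).mul_const _).add ((Real.hasDerivAt_sin θ).mul_const _)
  have := intervalIntegral.integral_eq_sub_of_hasDerivAt (a := 0) (b := Real.pi / 2)
    (fun θ _ => hd θ) (hkz.intervalIntegrable _ _)
  have e : f z.2 - f z.1 = ∫ θ in (0)..(Real.pi / 2),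
      ∑ p, g (ContinuousLinearMap.rotation θ z).1 p * (ContinuousLinearMap.rotation θ z).2 p := by
    rw [this]
    simp [ContinuousLinearMap.rotation_apply]
  rw [e]
  exact exp_integral_le_average hkz

/-- **Maurey–Pisier concentration**: if `f` has gradient `g` with `∑ g² ≤ L`, then
`log E exp f - E f ≤ π² L / 8`. The gradient is encoded through the chain rule along curves. -/
theorem gaussian_concentration {f : (ι → ℝ) → ℝ} {g : (ι → ℝ) → ι → ℝ} (hfc : Continuous f)
    (hg : Continuous g)
    (hf : ∀ (c : ℝ → ι → ℝ) (c' : ι → ℝ) (θ : ℝ),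
      (∀ p, HasDerivAt (fun y => c y p) (c' p) θ) →
        HasDerivAt (fun y => f (c y)) (∑ p, g (c θ) p * c' p) θ)
    {L : ℝ} (hL : ∀ x, ∑ p, g x p ^ 2 ≤ L) :
    Integrable f (stdG ι) ∧ Integrable (fun x => Real.exp (f x)) (stdG ι) ∧
      ∫ x, Real.exp (f x) ∂(stdG ι) ≤
        Real.exp (∫ x, f x ∂(stdG ι) + Real.pi ^ 2 * L / 8) := by
  have hpi := Real.pi_pos
  set K : ENNReal := ENNReal.ofReal (Real.exp (Real.pi ^ 2 * L / 8)) with hK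
  let k : (ι → ℝ) × (ι → ℝ) → ℝ := fun z => ∑ p, g z.1 p * z.2 p
  have hk : Continuous k := by
    refine continuous_finsetSum _ fun p _ => ?_
    exact ((continuous_apply p).comp (hg.comp continuous_fst)).mul
      ((continuous_apply p).comp continuous_snd)
  have hrot : Continuous fun q : ((ι → ℝ) × (ι → ℝ)) × ℝ => ContinuousLinearMap.rotation q.2 q.1 := by
    simp only [ContinuousLinearMap.rotation_apply]
    fun_prop
  have hkr : Continuous fun q : ((ι → ℝ) × (ι → ℝ)) × ℝ =>
      k (ContinuousLinearMap.rotation q.2 q.1) := hk.comp hrot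
  -- `k` at the rotated pair is the velocity of `f` along the quarter circle joining two
  -- independent copies
  have hpt : ∀ z : (ι → ℝ) × (ι → ℝ), ENNReal.ofReal (Real.exp (f z.2 - f z.1)) ≤
      ENNReal.ofReal (2 / Real.pi) * ∫⁻ θ in Set.Ioc 0 (Real.pi / 2),
        ENNReal.ofReal (Real.exp (Real.pi / 2 * k (ContinuousLinearMap.rotation θ z))) :=
    exp_increment_le hg hf
  -- for a fixed first copy, `k` is linear in the second, and its exponential moment is explicit
  have hgauss : ∫⁻ z, ENNReal.ofReal (Real.exp (Real.pi / 2 * k z)) ∂((stdG ι).prod (stdG ι)) ≤ K := by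
    rw [lintegral_prod _ (by fun_prop)]
    calc _ ≤ ∫⁻ _ : ι → ℝ, K ∂(stdG ι) := by
          refine lintegral_mono fun x => ?_
          have : ∀ y, Real.pi / 2 * k (x, y) = ∑ p, (Real.pi / 2 * g x p) * y p := by
            intro y; simp only [k, Finset.mul_sum, mul_assoc]
          simp only [this]
          rw [lintegral_exp_linear_stdG]
          refine ENNReal.ofReal_le_ofReal (Real.exp_le_exp.2 ?_)
          simp only [mul_pow, ← Finset.mul_sum]
          have := hL x
          have h2 : 0 ≤ Real.pi ^ 2 := by positivity
          nlinarith
      _ = K := by simp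
  have htot : ∫⁻ z, ENNReal.ofReal (Real.exp (f z.2 - f z.1)) ∂((stdG ι).prod (stdG ι)) ≤ K := by
    calc _ ≤ ∫⁻ z, ENNReal.ofReal (2 / Real.pi) * (∫⁻ θ in Set.Ioc 0 (Real.pi / 2),
          ENNReal.ofReal (Real.exp (Real.pi / 2 * k (ContinuousLinearMap.rotation θ z))))
            ∂((stdG ι).prod (stdG ι)) := lintegral_mono hpt
      _ = ENNReal.ofReal (2 / Real.pi) * ∫⁻ θ in Set.Ioc 0 (Real.pi / 2),
          (∫⁻ z, ENNReal.ofReal (Real.exp (Real.pi / 2 * k (ContinuousLinearMap.rotation θ z)))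
            ∂((stdG ι).prod (stdG ι))) := by
          rw [lintegral_const_mul' _ _ ENNReal.ofReal_ne_top]
          congr 1
          refine lintegral_lintegral_swap ?_
          have : Measurable fun q : ((ι → ℝ) × (ι → ℝ)) × ℝ => ENNReal.ofReal
              (Real.exp (Real.pi / 2 * k (ContinuousLinearMap.rotation q.2 q.1))) :=
            (ENNReal.continuous_ofReal.comp
              (Real.continuous_exp.comp (continuous_const.mul hkr))).measurable
          exact this.aemeasurable
      _ ≤ ENNReal.ofReal (2 / Real.pi) * ∫⁻ θ in Set.Ioc 0 (Real.pi / 2), K := by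
          gcongr with θ
          refine le_trans (le_of_eq ?_) hgauss
          conv_rhs => rw [← stdG_rotation θ]
          rw [lintegral_map (by fun_prop) (by fun_prop)]
      _ = K := by
          rw [setLIntegral_const, Real.volume_Ioc, sub_zero, mul_comm K, ← mul_assoc,
            ← ENNReal.ofReal_mul (by positivity)]
          have : 2 / Real.pi * (Real.pi / 2) = 1 := by field_simp
          rw [this, ENNReal.ofReal_one, one_mul]
  -- the double integral factorizes
  set P : ENNReal := ∫⁻ x, ENNReal.ofReal (Real.exp (f x)) ∂(stdG ι) with hP
  set Q : ENNReal := ∫⁻ x, ENNReal.ofReal (Real.exp (-f x)) ∂(stdG ι) with hQ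
  have hPQ : Q * P ≤ K := by
    refine le_trans (le_of_eq ?_) htot
    rw [hP, hQ, ← lintegral_prod_mul (by fun_prop) (by fun_prop)]
    refine lintegral_congr fun z => ?_
    rw [← ENNReal.ofReal_mul (Real.exp_pos _).le, ← Real.exp_add]
    congr 2; ring
  have hpos : ∀ h : (ι → ℝ) → ℝ, Continuous h →
      ∫⁻ x, ENNReal.ofReal (Real.exp (h x)) ∂(stdG ι) ≠ 0 := by
    intro h hh h0
    rw [lintegral_eq_zero_iff (by fun_prop)] at h0
    obtain ⟨x, hx⟩ := h0.exists
    simp at hx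
    exact absurd hx (not_le.2 (Real.exp_pos _))
  have hP0 : P ≠ 0 := hpos f hfc
  have hQ0 : Q ≠ 0 := hpos (fun x => -f x) hfc.neg
  have hKt : K ≠ ⊤ := ENNReal.ofReal_ne_top
  have hPt : P ≠ ⊤ := by
    intro h; rw [h, ENNReal.mul_top hQ0] at hPQ; exact hKt (top_le_iff.1 hPQ)
  have hQt : Q ≠ ⊤ := by
    intro h; rw [h, ENNReal.top_mul hP0] at hPQ; exact hKt (top_le_iff.1 hPQ)
  have hI : ∀ h : (ι → ℝ) → ℝ, Continuous h →
      ∫⁻ x, ENNReal.ofReal (Real.exp (h x)) ∂(stdG ι) ≠ ⊤ →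
      Integrable (fun x => Real.exp (h x)) (stdG ι) := by
    intro h hh ht
    exact (lintegral_ofReal_ne_top_iff_integrable (by fun_prop)
      (Filter.Eventually.of_forall fun x => (Real.exp_pos _).le)).1 ht
  have iP := hI f hfc hPt
  have iQ := hI (fun x => -f x) hfc.neg hQt
  have iF : Integrable f (stdG ι) := by
    refine (iP.add iQ).mono' hfc.aestronglyMeasurable (Filter.Eventually.of_forall fun x => ?_)
    rw [Real.norm_eq_abs, abs_le]
    have h1 := Real.add_one_le_exp (f x)
    have h2 := Real.add_one_le_exp (-f x)
    have h3 := Real.exp_pos (f x)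
    have h4 := Real.exp_pos (-f x)
    simp only [Pi.add_apply]
    constructor <;> linarith
  refine ⟨iF, iP, ?_⟩
  have hJ : Real.exp (∫ x, -f x ∂(stdG ι)) ≤ ∫ x, Real.exp (-f x) ∂(stdG ι) :=
    convexOn_exp.map_integral_le Real.continuous_exp.continuousOn isClosed_univ (by simp)
      iF.neg iQ
  have hPQ' : (∫ x, Real.exp (-f x) ∂(stdG ι)) * (∫ x, Real.exp (f x) ∂(stdG ι)) ≤
      Real.exp (Real.pi ^ 2 * L / 8) := by
    rw [← ENNReal.ofReal_le_ofReal_iff (Real.exp_pos _).le, ENNReal.ofReal_mul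
      (integral_nonneg fun x => (Real.exp_pos _).le),
      ofReal_integral_eq_lintegral_ofReal iQ (Filter.Eventually.of_forall fun x => (Real.exp_pos _).le),
      ofReal_integral_eq_lintegral_ofReal iP (Filter.Eventually.of_forall fun x => (Real.exp_pos _).le)]
    exact hPQ
  rw [integral_neg] at hJ
  have h5 : Real.exp (-∫ x, f x ∂(stdG ι)) * (∫ x, Real.exp (f x) ∂(stdG ι)) ≤
      Real.exp (Real.pi ^ 2 * L / 8) :=
    (mul_le_mul_of_nonneg_right hJ (integral_nonneg fun x => (Real.exp_pos _).le)).trans hPQ'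
  rw [Real.exp_neg, inv_mul_le_iff₀ (Real.exp_pos _), ← Real.exp_add] at h5
  exact h5

end Conc

/-! ### Matchings and involutive permutations -/

/-- `M` is a matching, its edges being recorded as increasing pairs. -/
def IsMatch {N : ℕ} (M : Finset (Fin N × Fin N)) : Prop :=
  (∀ p ∈ M, p.1 < p.2) ∧
    ∀ p ∈ M, ∀ q ∈ M, p ≠ q → p.1 ≠ q.1 ∧ p.1 ≠ q.2 ∧ p.2 ≠ q.1 ∧ p.2 ≠ q.2

/-- `σ` exchanges the end points of each edge of `M` and fixes every other vertex. -/
def Swaps {N : ℕ} (M : Finset (Fin N × Fin N)) (σ : Equiv.Perm (Fin N)) : Prop :=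
  ∀ i j, i < j → (σ i = j ↔ (i, j) ∈ M) ∧ (σ j = i ↔ (i, j) ∈ M)

/-- The involution attached to a matching `M`, and its term in the Leibniz expansion of a matrix `Z`
with constant diagonal `s` and skew-symmetric off-diagonal part: it equals
`s ^ (N - 2 |M|) ∏ Z_p²`. The factor `s ^ (2 |M|)` avoids the subtraction in the exponent. -/
lemma exists_swaps {N : ℕ} (M : Finset (Fin N × Fin N)) (hM : IsMatch M) :
    ∃ σ : Equiv.Perm (Fin N), Swaps M σ ∧
      ∀ (Z : Matrix (Fin N) (Fin N) ℝ) (s : ℝ), (∀ i, Z i i = s) →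
        (∀ i j, i ≠ j → Z j i = -Z i j) →
        s ^ (2 * M.card) * (((Equiv.Perm.sign σ : ℤ) : ℝ) * ∏ i, Z (σ i) i) =
          s ^ N * ∏ p ∈ M, (Z p.1 p.2) ^ 2 := by
  classical
  induction M using Finset.induction_on with
  | empty =>
    refine ⟨1, fun i j hij => ?_, fun Z s h1 _ => ?_⟩
    · simp [hij.ne, hij.ne']
    · simp [h1]
  | insert p M hp ih =>
    obtain ⟨i, j⟩ := p
    have hM' : IsMatch M := ⟨fun q hq => hM.1 q (Finset.mem_insert_of_mem hq),
      fun q hq r hr => hM.2 q (Finset.mem_insert_of_mem hq) r (Finset.mem_insert_of_mem hr)⟩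
    obtain ⟨σ, hσ, hprod⟩ := ih hM'
    have hij : i < j := hM.1 (i, j) (Finset.mem_insert_self _ _)
    have hdis : ∀ q ∈ M, i ≠ q.1 ∧ i ≠ q.2 ∧ j ≠ q.1 ∧ j ≠ q.2 := fun q hq =>
      hM.2 (i, j) (Finset.mem_insert_self _ _) q (Finset.mem_insert_of_mem hq)
        (fun h => hp (h ▸ hq))
    have hfix : ∀ x, (∀ q ∈ M, x ≠ q.1 ∧ x ≠ q.2) → σ x = x := by
      intro x hx
      rcases lt_trichotomy x (σ x) with h | h | h
      · exact absurd rfl (hx _ ((hσ x (σ x) h).1.1 rfl)).1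
      · exact h.symm
      · exact absurd rfl (hx _ ((hσ (σ x) x h).2.1 rfl)).2
    have hi : σ i = i := hfix i fun q hq => ⟨(hdis q hq).1, (hdis q hq).2.1⟩
    have hj : σ j = j := hfix j fun q hq => ⟨(hdis q hq).2.2.1, (hdis q hq).2.2.2⟩
    have hne : ∀ x, x ≠ i → x ≠ j → (Equiv.swap i j * σ) x = σ x := by
      intro x h1 h2
      rw [Equiv.Perm.mul_apply, Equiv.swap_apply_of_ne_of_ne]
      · intro h; exact h1 (σ.injective (h.trans hi.symm))
      · intro h; exact h2 (σ.injective (h.trans hj.symm))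
    have hi' : (Equiv.swap i j * σ) i = j := by rw [Equiv.Perm.mul_apply, hi, Equiv.swap_apply_left]
    have hj' : (Equiv.swap i j * σ) j = i := by rw [Equiv.Perm.mul_apply, hj, Equiv.swap_apply_right]
    refine ⟨Equiv.swap i j * σ, fun x y hxy => ?_, fun Z s h1 h2 => ?_⟩
    · have hmem : (x, y) ∈ insert (i, j) M ↔ (x = i ∧ y = j) ∨ (x, y) ∈ M := by
        simp [Finset.mem_insert, Prod.ext_iff]
      rw [hmem]
      have hx := hσ x y hxy
      have d := hdis (x, y)
      simp only at d
      constructor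
      · by_cases hxi : x = i
        · subst hxi; rw [hi']; constructor
          · intro h; exact Or.inl ⟨rfl, h.symm⟩
          · rintro (h | h)
            · exact h.2.symm
            · exact absurd rfl (d h).1
        · by_cases hxj : x = j
          · subst hxj; rw [hj']; constructor
            · intro h; subst h; exact absurd hij (not_lt.2 hxy.le)
            · rintro (h | h)
              · exact absurd h.1 hxi
              · exact absurd rfl (d h).2.2.1
          · rw [hne x hxi hxj, hx.1]; simp [hxi]
      · by_cases hyi : y = i
        · subst hyi; rw [hi']; constructor
          · intro h; subst h; exact absurd hij (not_lt.2 hxy.le)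
          · rintro (h | h)
            · exact absurd h.2 hij.ne
            · exact absurd rfl (d h).2.1
        · by_cases hyj : y = j
          · subst hyj; rw [hj']; constructor
            · intro h; exact Or.inl ⟨h.symm, rfl⟩
            · rintro (h | h)
              · exact h.1.symm
              · exact absurd rfl (d h).2.2.2
          · rw [hne y hyi hyj, hx.2]; simp [hyj]
    · have hsplit : ∀ τ : Equiv.Perm (Fin N), ∏ x, Z (τ x) x =
          Z (τ i) i * (Z (τ j) j * ∏ x ∈ (Finset.univ.erase i).erase j, Z (τ x) x) := by
        intro τ
        rw [Finset.mul_prod_erase _ (fun x => Z (τ x) x) (Finset.mem_erase.2 ⟨hij.ne', Finset.mem_univ j⟩),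
          Finset.mul_prod_erase _ (fun x => Z (τ x) x) (Finset.mem_univ i)]
      have hrest : ∏ x ∈ (Finset.univ.erase i).erase j, Z ((Equiv.swap i j * σ) x) x =
          ∏ x ∈ (Finset.univ.erase i).erase j, Z (σ x) x := by
        refine Finset.prod_congr rfl fun x hx => ?_
        simp only [Finset.mem_erase, Finset.mem_univ, and_true] at hx
        rw [hne x hx.2 hx.1]
      have hp' := hprod Z s h1 h2
      rw [hsplit, hi, hj, h1, h1] at hp'
      rw [hsplit, hi', hj', hrest, Finset.prod_insert hp, Finset.card_insert_of_notMem hp,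
        Equiv.Perm.sign_mul, Equiv.Perm.sign_swap hij.ne, h2 i j hij.ne]
      have : (((-1 * Equiv.Perm.sign σ : ℤˣ) : ℤ) : ℝ) = -((Equiv.Perm.sign σ : ℤ) : ℝ) := by
        push_cast; ring
      rw [this]
      linear_combination (Z i j) ^ 2 * hp'

lemma swaps_unique {N : ℕ} {M : Finset (Fin N × Fin N)} {σ τ : Equiv.Perm (Fin N)}
    (hσ : Swaps M σ) (hτ : Swaps M τ) : σ = τ := by
  have key : ∀ {σ τ : Equiv.Perm (Fin N)}, Swaps M σ → Swaps M τ → ∀ x, σ x ≠ x → τ x = σ x := by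
    intro σ τ hσ hτ x hx
    rcases lt_or_gt_of_ne hx with h | h
    · exact (hτ _ _ h).2.2 ((hσ _ _ h).2.1 rfl)
    · exact (hτ _ _ h).1.2 ((hσ _ _ h).1.1 rfl)
  ext1 x
  by_cases h : σ x = x
  · by_cases h' : τ x = x
    · rw [h, h']
    · exact key hτ hσ x h'
  · exact (key hσ hτ x h).symm

lemma swaps_inj {N : ℕ} {M M' : Finset (Fin N × Fin N)} {σ : Equiv.Perm (Fin N)}
    (hM : IsMatch M) (hM' : IsMatch M') (h : Swaps M σ) (h' : Swaps M' σ) : M = M' := by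
  ext ⟨i, j⟩
  constructor
  · intro hm; have hij := hM.1 _ hm; exact (h' i j hij).1.1 ((h i j hij).1.2 hm)
  · intro hm; have hij := hM'.1 _ hm; exact (h i j hij).1.1 ((h' i j hij).1.2 hm)

lemma exists_match_of_involutive {N : ℕ} {σ : Equiv.Perm (Fin N)} (h : ∀ i, σ (σ i) = i) :
    ∃ M, IsMatch M ∧ Swaps M σ := by
  classical
  refine ⟨Finset.univ.filter fun p => p.1 < p.2 ∧ σ p.1 = p.2, ⟨?_, ?_⟩, ?_⟩
  · intro p hp; exact (Finset.mem_filter.1 hp).2.1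
  · rintro ⟨i, j⟩ hp ⟨k, l⟩ hq hne
    simp only [Finset.mem_filter, Finset.mem_univ, true_and] at hp hq
    obtain ⟨h1, rfl⟩ := hp
    obtain ⟨h2, rfl⟩ := hq
    simp only [ne_eq, Prod.mk.injEq, not_and] at hne ⊢
    refine ⟨fun e => hne e (e ▸ rfl), fun e => ?_, fun e => ?_, fun e => ?_⟩
    · rw [e, h] at h1; exact absurd h1 (not_lt.2 h2.le)
    · rw [← e, h] at h2; exact absurd h2 (not_lt.2 h1.le)
    · exact hne (σ.injective e) e
  · intro i j hij
    simp only [Finset.mem_filter, Finset.mem_univ, true_and, hij]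
    constructor
    · intro e; rw [← e, h]
    · intro e; rw [← e, h]

/-! ### The expected determinant -/

/-- The index of the Gaussian variable which sits in position `(i, j)`, as well as `(j, i)`. -/
def slot {N : ℕ} (i j : Fin N) (h : i ≠ j) : PairIdx N :=
  ⟨(min i j, max i j), min_lt_max.2 h⟩

lemma slot_comm {N : ℕ} {i j : Fin N} (h : i ≠ j) : slot j i h.symm = slot i j h := by
  simp [slot, min_comm, max_comm]

lemma slot_of_lt {N : ℕ} {i j : Fin N} (h : i < j) : slot i j h.ne = ⟨(i, j), h⟩ := by
  simp [slot, h.le]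

lemma slot_eq {N : ℕ} {i j k l : Fin N} {h : i ≠ j} {h' : k ≠ l} (e : slot i j h = slot k l h') :
    (i = k ∧ j = l) ∨ (i = l ∧ j = k) := by
  simp only [slot, Subtype.mk.injEq, Prod.mk.injEq] at e
  rcases le_total i j with a | a <;> rcases le_total k l with b | b <;> simp_all

lemma sampleY_apply {N : ℕ} (A : Matrix (Fin N) (Fin N) ℝ) (ξ : PairIdx N → ℝ) {i j : Fin N}
    (h : i ≠ j) : sampleY A ξ i j = A i j * ξ (slot i j h) := by
  rcases lt_or_gt_of_ne h with h1 | h1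
  · simp [sampleY, slot_of_lt h1, h1]
  · rw [← slot_comm h, slot_of_lt h1]; simp [sampleY, h1, not_lt.2 h1.le]

lemma sampleY_diag {N : ℕ} (A : Matrix (Fin N) (Fin N) ℝ) (ξ : PairIdx N → ℝ) (i : Fin N) :
    sampleY A ξ i i = 0 := by simp [sampleY]

lemma sampleY_skew {N : ℕ} {A : Matrix (Fin N) (Fin N) ℝ} (hA : Aᵀ = -A) (ξ : PairIdx N → ℝ) :
    (sampleY A ξ)ᵀ = -sampleY A ξ := by
  ext i j
  by_cases h : i = j
  · subst h; simp [sampleY_diag]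
  · have : A j i = -A i j := congrFun (congrFun hA i) j
    rw [transpose_apply, neg_apply, sampleY_apply A ξ h, sampleY_apply A ξ (Ne.symm h), slot_comm h,
      this]
    ring

lemma continuous_sampleY {N : ℕ} (A : Matrix (Fin N) (Fin N) ℝ) :
    Continuous (sampleY A) := by
  refine continuous_pi fun i => continuous_pi fun j => ?_
  by_cases h : i = j
  · subst h; simp only [sampleY_diag]; fun_prop
  · simp only [sampleY_apply A _ h]; fun_prop

/-- One summand of the Leibniz expansion of `det (s + Y)`. -/
noncomputable def leibnizTerm {N : ℕ} (A : Matrix (Fin N) (Fin N) ℝ) (s : ℝ)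
    (σ : Equiv.Perm (Fin N)) (ξ : PairIdx N → ℝ) : ℝ :=
  ((Equiv.Perm.sign σ : ℤ) : ℝ) *
    ∏ i, (s • (1 : Matrix (Fin N) (Fin N) ℝ) + sampleY A ξ) (σ i) i

lemma memLp_entry {N : ℕ} (A : Matrix (Fin N) (Fin N) ℝ) (s : ℝ) (i j : Fin N) (p : ENNReal)
    (hp : p ≠ ⊤) :
    MemLp (fun ξ => (s • (1 : Matrix (Fin N) (Fin N) ℝ) + sampleY A ξ) i j) p
      (stdG (PairIdx N)) := by
  by_cases h : i = j
  · subst h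
    simp only [Matrix.add_apply, sampleY_diag]
    exact memLp_const _
  · simp only [Matrix.add_apply, sampleY_apply A _ h, Matrix.smul_apply, one_apply_ne h, smul_zero,
      zero_add]
    refine MemLp.const_mul ?_ _
    exact (IsGaussian.memLp_id (stdG (PairIdx N)) p hp).eval _

lemma integrable_leibnizTerm {N : ℕ} (A : Matrix (Fin N) (Fin N) ℝ) (s : ℝ)
    (σ : Equiv.Perm (Fin N)) : Integrable (leibnizTerm A s σ) (stdG (PairIdx N)) := by
  refine Integrable.const_mul ?_ _
  rcases Nat.eq_zero_or_pos N with h | h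
  · subst h; simp
  · have := MemLp.prod' (s := Finset.univ)
      (f := fun i ξ => (s • (1 : Matrix (Fin N) (Fin N) ℝ) + sampleY A ξ) (σ i) i)
      (p := fun _ => (N : ENNReal)) (μ := stdG (PairIdx N))
      (fun i _ => memLp_entry A s (σ i) i N (ENNReal.natCast_ne_top N))
    have e : (∑ i : Fin N, ((N : ENNReal))⁻¹)⁻¹ = 1 := by
      simp only [Finset.sum_const, Finset.card_univ, Fintype.card_fin, nsmul_eq_mul]
      rw [ENNReal.mul_inv_cancel (by exact_mod_cast h.ne') (ENNReal.natCast_ne_top N), inv_one]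
    rw [e] at this
    exact memLp_one_iff_integrable.1 this

/-- The Gaussian measure is invariant under changing the sign of one coordinate. -/
lemma measurePreserving_flip {ι : Type*} [Fintype ι] [DecidableEq ι] (p : ι) :
    MeasurePreserving (fun (x : ι → ℝ) i => if i = p then -x i else x i) (stdG ι) (stdG ι) := by
  have h : ∀ i : ι, MeasurePreserving (fun y : ℝ => if i = p then -y else y)
      (gaussianReal 0 1) (gaussianReal 0 1) := by
    intro i
    by_cases hi : i = p
    · simp only [hi, if_true]
      exact ⟨measurable_neg, by rw [gaussianReal_map_neg, neg_zero]⟩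
    · simp only [hi, if_false]
      exact MeasurePreserving.id _
  exact measurePreserving_pi _ _ h

/-- A permutation with a cycle of length at least three contributes nothing to the expected
determinant: along such a cycle some Gaussian variable occurs exactly once. -/
lemma integral_leibnizTerm_of_not_involutive {N : ℕ} (A : Matrix (Fin N) (Fin N) ℝ) (s : ℝ)
    (σ : Equiv.Perm (Fin N)) {x : Fin N} (hx : σ (σ x) ≠ x) :
    ∫ ξ, leibnizTerm A s σ ξ ∂stdG (PairIdx N) = 0 := by
  have hne : σ x ≠ x := fun h => hx (by rw [h, h])
  set p := slot (σ x) x hne with hp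
  have mp := measurePreserving_flip p
  have hodd : ∀ ξ : PairIdx N → ℝ,
      leibnizTerm A s σ (fun i => if i = p then -ξ i else ξ i) = - leibnizTerm A s σ ξ := by
    intro ξ
    unfold leibnizTerm
    rw [← mul_neg]
    congr 1
    rw [← Finset.mul_prod_erase _ _ (Finset.mem_univ x),
      ← Finset.mul_prod_erase Finset.univ (fun i => (s • (1 : Matrix (Fin N) (Fin N) ℝ) +
        sampleY A ξ) (σ i) i) (Finset.mem_univ x), ← neg_mul]
    congr 1
    · simp [sampleY_apply A _ hne, hne, hp]
    · refine Finset.prod_congr rfl fun i hi => ?_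
      have hix : i ≠ x := (Finset.mem_erase.1 hi).1
      simp only [Matrix.add_apply]
      congr 1
      by_cases h : σ i = i
      · rw [h, sampleY_diag, sampleY_diag]
      · rw [sampleY_apply A _ h, sampleY_apply A _ h, if_neg]
        intro e
        rcases slot_eq (e.trans hp) with h1 | h1
        · exact hix h1.2
        · exact hx (by rw [← h1.2, h1.1])
  have h1 : ∫ ξ, leibnizTerm A s σ (fun i => if i = p then -ξ i else ξ i) ∂stdG (PairIdx N) =
      ∫ ξ, leibnizTerm A s σ ξ ∂stdG (PairIdx N) := by
    have hm := (integrable_leibnizTerm A s σ).aestronglyMeasurable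
    rw [← mp.map_eq] at hm
    conv_rhs => rw [← mp.map_eq]
    rw [integral_map mp.measurable.aemeasurable hm]
  simp only [hodd, integral_neg] at h1
  linarith

lemma integral_sq_gaussianReal : ∫ x, x ^ 2 ∂(gaussianReal 0 1) = 1 := by
  have h := variance_eq_sub (μ := gaussianReal 0 1) (X := id) (memLp_id_gaussianReal 2)
  rw [variance_id_gaussianReal] at h
  simpa using h.symm

lemma integral_prod_match {N : ℕ} (A : Matrix (Fin N) (Fin N) ℝ) (s : ℝ)
    {M : Finset (Fin N × Fin N)} (hM : IsMatch M) :
    ∫ ξ, ∏ p ∈ M, ((s • (1 : Matrix (Fin N) (Fin N) ℝ) + sampleY A ξ) p.1 p.2) ^ 2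
      ∂stdG (PairIdx N) = ∏ p ∈ M, (A p.1 p.2) ^ 2 := by
  classical
  have h : ∀ ξ : PairIdx N → ℝ,
      ∏ p ∈ M, ((s • (1 : Matrix (Fin N) (Fin N) ℝ) + sampleY A ξ) p.1 p.2) ^ 2 =
      (∏ p ∈ M, (A p.1 p.2) ^ 2) * ∏ q : PairIdx N, if q.1 ∈ M then (ξ q) ^ 2 else 1 := by
    intro ξ
    have e1 : ∏ q : PairIdx N, (if q.1 ∈ M then (ξ q) ^ 2 else 1) =
        ∏ p ∈ M.attach, (ξ ⟨p.1, hM.1 p.1 p.2⟩) ^ 2 := by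
      rw [← Finset.prod_filter]
      symm
      refine Finset.prod_bij (fun p _ => ⟨p.1, hM.1 p.1 p.2⟩) ?_ ?_ ?_ ?_
      · intro p _; simp
      · intro p _ q _ e; exact Subtype.ext (congrArg (fun r : PairIdx N => r.1) e)
      · intro q hq; exact ⟨⟨q.1, (Finset.mem_filter.1 hq).2⟩, Finset.mem_attach _ _, rfl⟩
      · intro p _; rfl
    rw [e1, ← Finset.prod_attach,
      ← Finset.prod_attach M (fun p : Fin N × Fin N => (A p.1 p.2) ^ 2),
      ← Finset.prod_mul_distrib]
    refine Finset.prod_congr rfl fun p _ => ?_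
    have hlt := hM.1 p.1 p.2
    rw [Matrix.add_apply, sampleY_apply A ξ hlt.ne, slot_of_lt hlt]
    simp [one_apply_ne hlt.ne, mul_pow]
  simp only [h]
  rw [integral_const_mul]
  have := integral_fintype_prod_eq_prod (𝕜 := ℝ) (μ := fun _ : PairIdx N => gaussianReal 0 1)
    (fun (q : PairIdx N) (y : ℝ) => if q.1 ∈ M then y ^ 2 else 1)
  rw [this]
  convert mul_one _
  refine Finset.prod_eq_one fun q _ => ?_
  by_cases hq : q.1 ∈ M
  · simp only [hq, if_true, integral_sq_gaussianReal]
  · simp [hq]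

lemma integral_leibnizTerm_match {N : ℕ} {A : Matrix (Fin N) (Fin N) ℝ} (hA : Aᵀ = -A) (s : ℝ)
    {M : Finset (Fin N × Fin N)} (hM : IsMatch M) {σ : Equiv.Perm (Fin N)} (hσ : Swaps M σ) :
    s ^ (2 * M.card) * ∫ ξ, leibnizTerm A s σ ξ ∂stdG (PairIdx N) =
      s ^ N * ∏ p ∈ M, (A p.1 p.2) ^ 2 := by
  obtain ⟨τ, hτ, h⟩ := exists_swaps M hM
  obtain rfl := swaps_unique hσ hτ
  rw [← integral_const_mul, ← integral_prod_match A s hM, ← integral_const_mul]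
  refine integral_congr_ae (ae_of_all _ fun ξ => ?_)
  refine h _ s (fun i => by simp [sampleY_diag]) fun i j hij => ?_
  have : sampleY A ξ j i = -sampleY A ξ i j := congrFun (congrFun (sampleY_skew hA ξ) i) j
  simp [this, one_apply_ne hij, one_apply_ne hij.symm]

lemma integral_leibnizTerm_nonneg {N : ℕ} {A : Matrix (Fin N) (Fin N) ℝ} (hA : Aᵀ = -A) {s : ℝ}
    (hs : 0 < s) (σ : Equiv.Perm (Fin N)) :
    0 ≤ ∫ ξ, leibnizTerm A s σ ξ ∂stdG (PairIdx N) := by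
  by_cases h : ∀ i, σ (σ i) = i
  · obtain ⟨M, hM, hσ⟩ := exists_match_of_involutive h
    have := integral_leibnizTerm_match hA s hM hσ
    have h2 : 0 ≤ s ^ N * ∏ p ∈ M, (A p.1 p.2) ^ 2 :=
      mul_nonneg (pow_nonneg hs.le _) (Finset.prod_nonneg fun _ _ => sq_nonneg _)
    rw [← this] at h2
    exact nonneg_of_mul_nonneg_right h2 (pow_pos hs _)
  · push Not at h
    obtain ⟨x, hx⟩ := h
    rw [integral_leibnizTerm_of_not_involutive A s σ hx]

/-- Half of the Godsil–Gutman identity `Φ(t, A) = E det (√t + Y_A)`. -/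
lemma PhiFull_le_integral_det {N : ℕ} {A : Matrix (Fin N) (Fin N) ℝ} (hA : Aᵀ = -A) {t : ℝ}
    (ht : 0 < t) :
    PhiFull A t ≤ ∫ ξ, (Real.sqrt t • (1 : Matrix (Fin N) (Fin N) ℝ) + sampleY A ξ).det
      ∂stdG (PairIdx N) := by
  classical
  set s := Real.sqrt t with hs
  have hs0 : 0 < s := Real.sqrt_pos.2 ht
  have hst : s ^ 2 = t := Real.sq_sqrt ht.le
  choose S hS using fun M : {M : Finset (Fin N × Fin N) // IsMatch M} => exists_swaps M.1 M.2
  let e : Finset (Fin N × Fin N) → Equiv.Perm (Fin N) := fun M => if h : IsMatch M then S ⟨M, h⟩ else 1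
  have he : ∀ M, IsMatch M → Swaps M (e M) := by
    intro M hM
    simp only [e, hM, dif_pos]
    exact (hS ⟨M, hM⟩).1
  have hdet : ∫ ξ, (s • (1 : Matrix (Fin N) (Fin N) ℝ) + sampleY A ξ).det ∂stdG (PairIdx N) =
      ∑ σ : Equiv.Perm (Fin N), ∫ ξ, leibnizTerm A s σ ξ ∂stdG (PairIdx N) := by
    rw [← integral_finsetSum _ fun σ _ => integrable_leibnizTerm A s σ]
    refine integral_congr_ae (ae_of_all _ fun ξ => ?_)
    simp only [det_apply', leibnizTerm]
  have hpow : ∀ k, k ≤ N / 2 → (if Even N then 1 else s) * t ^ (N / 2 - k) * s ^ (2 * k) = s ^ N := by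
    intro k hk
    rw [← hst, ← pow_mul]
    split_ifs with hN
    · rw [one_mul, ← pow_add]; congr 1; have := Nat.even_iff.1 hN; omega
    · rw [← pow_succ', ← pow_add]; congr 1
      have := Nat.odd_iff.1 (Nat.not_even_iff_odd.1 hN); omega
  set E : Equiv.Perm (Fin N) → ℝ := fun σ => ∫ ξ, leibnizTerm A s σ ξ ∂stdG (PairIdx N) with hE
  have hterm : ∀ M, IsMatch M → M.card ≤ N / 2 →
      (if Even N then 1 else s) * ((∏ p ∈ M, (A p.1 p.2) ^ 2) * t ^ (N / 2 - M.card)) = E (e M) := by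
    intro M hM hk
    have h1 := integral_leibnizTerm_match hA s hM (he M hM)
    have h2 := hpow _ hk
    have h3 : s ^ (2 * M.card) ≠ 0 := (pow_pos hs0 _).ne'
    apply mul_left_cancel₀ h3
    rw [hE]
    simp only
    rw [h1, ← h2]; ring
  set T := Finset.univ.filter (fun M : Finset (Fin N × Fin N) => IsMatch M ∧ M.card < N / 2 + 1)
    with hT
  have hPhi : PhiFull A t = ∑ M ∈ T, E (e M) := by
    rw [← Finset.sum_fiberwise_of_maps_to (s := T) (t := Finset.range (N / 2 + 1))
      (g := fun M => M.card) (fun M hM => Finset.mem_range.2 (Finset.mem_filter.1 hM).2.2)]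
    unfold PhiFull PhiW phiW
    rw [Finset.mul_sum]
    refine Finset.sum_congr rfl fun k hk => ?_
    rw [Finset.sum_mul, Finset.mul_sum]
    refine Finset.sum_congr ?_ fun M hM => ?_
    · ext M
      simp only [hT, Finset.mem_filter, Finset.mem_univ, true_and]
      constructor
      · rintro ⟨h1, rfl⟩; exact ⟨⟨h1, Finset.mem_range.1 hk⟩, rfl⟩
      · rintro ⟨⟨h1, _⟩, rfl⟩; exact ⟨h1, rfl⟩
    · simp only [hT, Finset.mem_filter, Finset.mem_univ, true_and] at hM
      rw [← hterm M hM.1.1 (by omega), hM.2]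
  rw [hdet, hPhi]
  have hinj : Set.InjOn e T := by
    intro M hM M' hM' h
    have a := (Finset.mem_filter.1 hM).2.1
    have b := (Finset.mem_filter.1 hM').2.1
    exact swaps_inj a b (he M a) (h ▸ he M' b)
  rw [← Finset.sum_image (f := E) hinj]
  exact Finset.sum_le_sum_of_subset_of_nonneg (Finset.subset_univ _)
    fun σ _ _ => integral_leibnizTerm_nonneg hA hs0 σ

lemma PhiFull_pos {N : ℕ} (A : Matrix (Fin N) (Fin N) ℝ) {t : ℝ} (ht : 0 < t) :
    0 < PhiFull A t := by
  have hphi : ∀ k, 0 ≤ phiW A k := fun k =>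
    Finset.sum_nonneg fun M _ => Finset.prod_nonneg fun _ _ => sq_nonneg _
  have h0 : phiW A 0 = 1 := by
    unfold phiW
    rw [Finset.sum_eq_single ∅]
    · simp
    · intro M hM h; exact absurd (Finset.card_eq_zero.1 (Finset.mem_filter.1 hM).2.2) h
    · simp
  refine mul_pos (by split_ifs <;> [exact one_pos; exact Real.sqrt_pos.2 ht]) ?_
  refine Finset.sum_pos' (fun k _ => mul_nonneg (hphi k) (pow_nonneg ht.le _))
    ⟨0, by simp, ?_⟩
  rw [h0, one_mul]; exact pow_pos ht _

/-! ### Gradient and integration by parts for the random resolvent -/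

section Resolvent
variable {N : ℕ}

/-- The resolvent `(s + Y_A(ξ))⁻¹`. -/
noncomputable def resol (A : Matrix (Fin N) (Fin N) ℝ) (s : ℝ) (ξ : PairIdx N → ℝ) :
    Matrix (Fin N) (Fin N) ℝ :=
  (s • (1 : Matrix (Fin N) (Fin N) ℝ) + sampleY A ξ)⁻¹

/-- `log det (s + Y_A(ξ))`. -/
noncomputable def logDet (A : Matrix (Fin N) (Fin N) ℝ) (s : ℝ) (ξ : PairIdx N → ℝ) : ℝ :=
  Real.log (s • (1 : Matrix (Fin N) (Fin N) ℝ) + sampleY A ξ).det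

/-- The partial derivatives of `logDet A s` with respect to the Gaussian variables. -/
noncomputable def gradLogDet (A : Matrix (Fin N) (Fin N) ℝ) (s : ℝ) (ξ : PairIdx N → ℝ)
    (p : PairIdx N) : ℝ :=
  A p.1.1 p.1.2 * (resol A s ξ p.1.2 p.1.1 - resol A s ξ p.1.1 p.1.2)

lemma sum_offdiag (H : Fin N → Fin N → ℝ) (hH : ∀ i, H i i = 0) :
    ∑ i, ∑ j, H i j = ∑ p : PairIdx N, (H p.1.1 p.1.2 + H p.1.2 p.1.1) := by
  have h1 : ∑ p : PairIdx N, (H p.1.1 p.1.2 + H p.1.2 p.1.1) =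
      ∑ p ∈ Finset.univ.filter (fun p : Fin N × Fin N => p.1 < p.2), (H p.1 p.2 + H p.2 p.1) := by
    rw [Finset.sum_subtype (p := fun p : Fin N × Fin N => p.1 < p.2) _ (by simp)]
  have h2 : ∀ i j : Fin N, H i j = (if i < j then H i j else 0) + (if j < i then H i j else 0) := by
    intro i j
    rcases lt_trichotomy i j with h | h | h
    · simp [h, not_lt.2 h.le]
    · subst h; simp [hH]
    · simp [h, not_lt.2 h.le]
  rw [h1, Finset.sum_filter, Fintype.sum_prod_type]
  calc ∑ i, ∑ j, H i j
      = ∑ i, ∑ j, (if i < j then H i j else 0) + ∑ i, ∑ j, (if j < i then H i j else 0) := by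
        simp only [← Finset.sum_add_distrib]
        exact Finset.sum_congr rfl fun i _ => Finset.sum_congr rfl fun j _ => h2 i j
    _ = ∑ i, ∑ j, (if i < j then H i j else 0) + ∑ i, ∑ j, (if i < j then H j i else 0) := by
        congr 1
        exact Finset.sum_comm
    _ = _ := by
        simp only [← Finset.sum_add_distrib]
        refine Finset.sum_congr rfl fun i _ => Finset.sum_congr rfl fun j _ => ?_
        by_cases h : i < j <;> simp [h]

variable {A : Matrix (Fin N) (Fin N) ℝ}

lemma isUnit_det_sample (hA : Aᵀ = -A) {s : ℝ} (hs : 0 < s) (ξ : PairIdx N → ℝ) :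
    IsUnit (s • (1 : Matrix (Fin N) (Fin N) ℝ) + sampleY A ξ).det :=
  isUnit_det_shift (sampleY_skew hA ξ) hs

lemma continuous_logDet (hA : Aᵀ = -A) {s : ℝ} (hs : 0 < s) : Continuous (logDet A s) :=
  Continuous.log (Continuous.matrix_det (continuous_const.add (continuous_sampleY A)))
    fun ξ => (isUnit_det_sample hA hs ξ).ne_zero

lemma continuous_resol (hA : Aᵀ = -A) {s : ℝ} (hs : 0 < s) (i j : Fin N) :
    Continuous fun ξ => resol A s ξ i j := by
  have hM : Continuous fun ξ => s • (1 : Matrix (Fin N) (Fin N) ℝ) + sampleY A ξ :=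
    continuous_const.add (continuous_sampleY A)
  simp only [resol, inv_def, Matrix.smul_apply, Ring.inverse_eq_inv', smul_eq_mul]
  refine Continuous.mul (hM.matrix_det.inv₀ fun ξ => (isUnit_det_sample hA hs ξ).ne_zero) ?_
  exact (hM.matrix_adjugate).matrix_elem i j

lemma hasDerivAt_sample_entry (s : ℝ) {c : ℝ → PairIdx N → ℝ} {c' : PairIdx N → ℝ} {θ : ℝ}
    (hc : ∀ p, HasDerivAt (fun y => c y p) (c' p) θ) (i j : Fin N) :
    HasDerivAt (fun y => (s • (1 : Matrix (Fin N) (Fin N) ℝ) + sampleY A (c y)) i j)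
      (sampleY A c' i j) θ := by
  simp only [Matrix.add_apply]
  refine HasDerivAt.const_add _ ?_
  by_cases h : i = j
  · subst h; simp only [sampleY_diag]; exact hasDerivAt_const _ _
  · simp only [sampleY_apply A _ h]
    exact (hc _).const_mul _

lemma hasDerivAt_logDet (hA : Aᵀ = -A) {s : ℝ} (hs : 0 < s) (c : ℝ → PairIdx N → ℝ)
    (c' : PairIdx N → ℝ) (θ : ℝ) (hc : ∀ p, HasDerivAt (fun y => c y p) (c' p) θ) :
    HasDerivAt (fun y => logDet A s (c y)) (∑ p, gradLogDet A s (c θ) p * c' p) θ := by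
  have h := hasDerivAt_log_det (hasDerivAt_sample_entry (A := A) s hc)
    (isUnit_det_sample hA hs (c θ))
  refine h.congr_deriv ?_
  change (resol A s (c θ) * sampleY A c').trace = _
  simp only [trace, diag_apply, mul_apply]
  rw [Finset.sum_comm, sum_offdiag (fun i j => resol A s (c θ) j i * sampleY A c' i j)
    (fun i => by rw [sampleY_diag, mul_zero])]
  refine Finset.sum_congr rfl fun p _ => ?_
  have hp := p.2
  have hskew : A p.1.2 p.1.1 = -A p.1.1 p.1.2 := congrFun (congrFun hA p.1.1) p.1.2
  rw [sampleY_apply A c' hp.ne, sampleY_apply A c' hp.ne', slot_comm hp.ne, slot_of_lt hp, hskew]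
  simp only [gradLogDet]
  ring

/-- The squared gradient of `log det (s + Y)` is controlled by the squared Hilbert–Schmidt norm of
the resolvent, which is at most `N / s²`. -/
lemma sum_gradLogDet_sq_le (hA : Aᵀ = -A) {a : ℝ} (ha : ∀ i j, (A i j) ^ 2 ≤ a ^ 2) {s : ℝ}
    (hs : 0 < s) (ξ : PairIdx N → ℝ) :
    ∑ p, gradLogDet A s ξ p ^ 2 ≤ 2 * a ^ 2 * N / s ^ 2 := by
  set G := resol A s ξ with hG
  have h1 : ∑ p, gradLogDet A s ξ p ^ 2 ≤ ∑ p : PairIdx N,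
      (2 * a ^ 2 * (if p.1.1 = p.1.2 then 0 else (G p.1.2 p.1.1) ^ 2) +
        2 * a ^ 2 * (if p.1.2 = p.1.1 then 0 else (G p.1.1 p.1.2) ^ 2)) := by
    refine Finset.sum_le_sum fun p _ => ?_
    rw [if_neg p.2.ne, if_neg p.2.ne']
    simp only [gradLogDet, mul_pow, ← hG]
    have h2 : (G p.1.2 p.1.1 - G p.1.1 p.1.2) ^ 2 ≤
        2 * (G p.1.2 p.1.1) ^ 2 + 2 * (G p.1.1 p.1.2) ^ 2 := by
      nlinarith [sq_nonneg (G p.1.2 p.1.1 + G p.1.1 p.1.2)]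
    calc _ ≤ a ^ 2 * (2 * (G p.1.2 p.1.1) ^ 2 + 2 * (G p.1.1 p.1.2) ^ 2) :=
          mul_le_mul (ha _ _) h2 (sq_nonneg _) (sq_nonneg _)
      _ = _ := by ring
  refine h1.trans ?_
  rw [← sum_offdiag (fun i j => 2 * a ^ 2 * (if i = j then 0 else (G j i) ^ 2)) (fun i => by simp)]
  simp only [← Finset.mul_sum]
  have h3 : ∑ i, ∑ j, (if i = j then 0 else (G j i) ^ 2) ≤ (N : ℝ) / s ^ 2 := by
    calc _ ≤ ∑ i, ∑ j, (G j i) ^ 2 := Finset.sum_le_sum fun i _ => Finset.sum_le_sum fun j _ => by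
            split_ifs <;> [exact sq_nonneg _; exact le_rfl]
      _ ≤ _ := by simpa [hG, resol] using resolvent_sq_sum_le (sampleY_skew hA ξ) hs
  rw [mul_div_assoc]
  exact mul_le_mul_of_nonneg_left h3 (by positivity)

/-- Gaussian concentration for the logarithm of the determinant. -/
lemma logDet_concentration (hA : Aᵀ = -A) {a : ℝ} (ha : ∀ i j, (A i j) ^ 2 ≤ a ^ 2) {s : ℝ}
    (hs : 0 < s) :
    Integrable (logDet A s) (stdG (PairIdx N)) ∧
      Integrable (fun ξ => Real.exp (logDet A s ξ)) (stdG (PairIdx N)) ∧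
      ∫ ξ, Real.exp (logDet A s ξ) ∂stdG (PairIdx N) ≤
        Real.exp (∫ ξ, logDet A s ξ ∂stdG (PairIdx N) +
          Real.pi ^ 2 * (2 * a ^ 2 * N / s ^ 2) / 8) := by
  refine gaussian_concentration (continuous_logDet hA hs) ?_ (hasDerivAt_logDet hA hs)
    (sum_gradLogDet_sq_le hA ha hs)
  refine continuous_pi fun p => ?_
  exact continuous_const.mul ((continuous_resol hA hs _ _).sub (continuous_resol hA hs _ _))

lemma integrable_of_continuous_bounded {F : (PairIdx N → ℝ) → ℝ} (hF : Continuous F) {K : ℝ}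
    (hK : ∀ x, |F x| ≤ K) : Integrable F (stdG (PairIdx N)) :=
  Integrable.of_bound hF.aestronglyMeasurable K (ae_of_all _ hK)

lemma abs_resol_le (hA : Aᵀ = -A) {s : ℝ} (hs : 0 < s) (ξ : PairIdx N → ℝ) (i j : Fin N) :
    |resol A s ξ i j| ≤ 1 / s :=
  resolvent_abs_le (sampleY_skew hA ξ) hs i j

lemma integrable_resol (hA : Aᵀ = -A) {s : ℝ} (hs : 0 < s) (i j : Fin N) :
    Integrable (fun ξ => resol A s ξ i j) (stdG (PairIdx N)) :=
  integrable_of_continuous_bounded (continuous_resol hA hs i j) fun ξ => abs_resol_le hA hs ξ i j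

lemma integrable_resol_mul (hA : Aᵀ = -A) {s : ℝ} (hs : 0 < s) (i j k l : Fin N) :
    Integrable (fun ξ => resol A s ξ i j * resol A s ξ k l) (stdG (PairIdx N)) := by
  refine integrable_of_continuous_bounded (K := 1 / s * (1 / s))
    ((continuous_resol hA hs i j).mul (continuous_resol hA hs k l)) fun ξ => ?_
  rw [abs_mul]
  exact mul_le_mul (abs_resol_le hA hs ξ i j) (abs_resol_le hA hs ξ k l) (abs_nonneg _)
    (by positivity)

/-- The derivative of `Y_A` with respect to the Gaussian variable in position `(i, j)`. -/
lemma sampleY_single (hA : Aᵀ = -A) {i j : Fin N} (h : i ≠ j) :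
    sampleY A (Pi.single (slot i j h) 1) =
      Matrix.single i j (A i j) - Matrix.single j i (A i j) := by
  ext k l
  have hskew : A j i = -A i j := congrFun (congrFun hA i) j
  by_cases hkl : k = l
  · subst hkl
    have h1 : ¬ (i = k ∧ j = k) := fun e => h (e.1.trans e.2.symm)
    have h2 : ¬ (j = k ∧ i = k) := fun e => h (e.2.trans e.1.symm)
    simp [sampleY_diag, h1, h2]
  · rw [sampleY_apply A _ hkl, Matrix.sub_apply, single_apply, single_apply]
    by_cases h1 : i = k ∧ j = l
    · obtain ⟨rfl, rfl⟩ := h1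
      simp [h.symm]
    · by_cases h2 : j = k ∧ i = l
      · obtain ⟨rfl, rfl⟩ := h2
        simp [h, slot_comm h, hskew]
      · rw [if_neg h1, if_neg h2, Pi.single_eq_of_ne]
        · simp
        · intro e
          rcases slot_eq e with e | e
          · exact h1 ⟨e.1.symm, e.2.symm⟩
          · exact h2 ⟨e.1.symm, e.2.symm⟩

/-- Gaussian integration by parts for a resolvent entry. -/
lemma stein_resol (hA : Aᵀ = -A) {s : ℝ} (hs : 0 < s) {i j : Fin N} (h : i ≠ j) :
    ∫ ξ, ξ (slot i j h) * resol A s ξ j i ∂stdG (PairIdx N) =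
      ∫ ξ, A i j * (resol A s ξ i i * resol A s ξ j j - resol A s ξ j i * resol A s ξ j i)
        ∂stdG (PairIdx N) := by
  refine stein_coord (slot i j h) (F := fun ξ => resol A s ξ j i) (K := 1 / s)
    (K' := |A i j| * (1 / s * (1 / s) + 1 / s * (1 / s))) ?_
    (fun ξ => abs_resol_le hA hs ξ j i) ?_ (continuous_resol hA hs j i).measurable ?_
  · intro x y
    have hc : ∀ p, HasDerivAt (fun y => Function.update x (slot i j h) y p)
        ((Pi.single (slot i j h) (1 : ℝ) : PairIdx N → ℝ) p) y := by
      intro p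
      by_cases hp : p = slot i j h
      · subst hp; simpa using hasDerivAt_id' y
      · simp only [Function.update_of_ne hp, Pi.single_eq_of_ne hp]
        exact hasDerivAt_const _ _
    have hd := hasDerivAt_inv_entry (hasDerivAt_sample_entry (A := A) s hc)
      (isUnit_det_sample hA hs _) j i
    refine hd.congr_deriv ?_
    change -(resol A s _ * sampleY A _ * resol A s _) j i = _
    rw [sampleY_single hA h]
    generalize resol A s (Function.update x (slot i j h) y) = G
    have e : ∀ k l : Fin N, (G * Matrix.single k l (A i j) * G) j i = A i j * (G j k * G l i) := by
      intro k l
      rw [Matrix.mul_assoc, mul_apply, Finset.sum_eq_single k]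
      · rw [single_mul_apply_same]; ring
      · intro q _ hq; rw [single_mul_apply_of_ne _ _ _ _ _ hq, mul_zero]
      · simp
    rw [Matrix.mul_sub, Matrix.sub_mul, Matrix.sub_apply, e, e]
    ring
  · intro ξ
    rw [abs_mul]
    refine mul_le_mul_of_nonneg_left ((abs_sub _ _).trans ?_) (abs_nonneg _)
    rw [abs_mul, abs_mul]
    have hb := fun k l => abs_resol_le hA hs ξ k l
    have hp : 0 ≤ 1 / s := by positivity
    exact add_le_add (mul_le_mul (hb _ _) (hb _ _) (abs_nonneg _) hp)
      (mul_le_mul (hb _ _) (hb _ _) (abs_nonneg _) hp)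
  · have c := fun k l => (continuous_resol hA hs k l)
    exact (continuous_const.mul (((c i i).mul (c j j)).sub ((c j i).mul (c j i)))).measurable

end Resolvent

/-! ### Bipartite weights -/

section Bipartite
variable {N : ℕ}

/-- `A` is a skew-symmetric weighting of the complete bipartite graph with sides `U` and `Uᶜ`,
where `U` is the smaller side and the squared weights lie in `[b ^ 2, a ^ 2]`. -/
structure BipWeights (A : Matrix (Fin N) (Fin N) ℝ) (U : Finset (Fin N)) (b a : ℝ) : Prop where
  skew : Aᵀ = -A
  zero : ∀ i j, (i ∈ U ↔ j ∈ U) → A i j = 0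
  lower : ∀ i ∈ U, ∀ j ∈ Uᶜ, b ^ 2 ≤ (A i j) ^ 2
  upper : ∀ i j, (A i j) ^ 2 ≤ a ^ 2
  card_le : U.card ≤ Uᶜ.card

/-- The part of the trace of the resolvent carried by the vertices in `V`. -/
noncomputable def partTrace (A : Matrix (Fin N) (Fin N) ℝ) (V : Finset (Fin N)) (s : ℝ)
    (ξ : PairIdx N → ℝ) : ℝ :=
  ∑ i ∈ V, resol A s ξ i i

variable {A : Matrix (Fin N) (Fin N) ℝ} {U : Finset (Fin N)} {b a : ℝ}

lemma partTrace_nonneg (hA : Aᵀ = -A) (V : Finset (Fin N)) {s : ℝ} (hs : 0 < s)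
    (ξ : PairIdx N → ℝ) : 0 ≤ partTrace A V s ξ :=
  Finset.sum_nonneg fun i _ => resolvent_diag_nonneg (sampleY_skew hA ξ) hs i

lemma partTrace_le (hA : Aᵀ = -A) (V : Finset (Fin N)) {s : ℝ} (hs : 0 < s)
    (ξ : PairIdx N → ℝ) : partTrace A V s ξ ≤ N / s := by
  calc partTrace A V s ξ ≤ ∑ i : Fin N, resol A s ξ i i :=
        Finset.sum_le_sum_of_subset_of_nonneg (Finset.subset_univ _)
          fun i _ _ => resolvent_diag_nonneg (sampleY_skew hA ξ) hs i
    _ ≤ ∑ i : Fin N, 1 / s :=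
        Finset.sum_le_sum fun i _ => resolvent_diag_le (sampleY_skew hA ξ) hs i
    _ = N / s := by simp [div_eq_mul_inv]

lemma abs_partTrace_le (hA : Aᵀ = -A) (V : Finset (Fin N)) {s : ℝ} (hs : 0 < s)
    (ξ : PairIdx N → ℝ) : |partTrace A V s ξ| ≤ N / s := by
  rw [abs_of_nonneg (partTrace_nonneg hA V hs ξ)]
  exact partTrace_le hA V hs ξ

lemma continuous_partTrace (hA : Aᵀ = -A) (V : Finset (Fin N)) {s : ℝ} (hs : 0 < s) :
    Continuous (partTrace A V s) :=
  continuous_finsetSum _ fun i _ => continuous_resol hA hs i i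

lemma integrable_partTrace (hA : Aᵀ = -A) (V : Finset (Fin N)) {s : ℝ} (hs : 0 < s) :
    Integrable (partTrace A V s) (stdG (PairIdx N)) :=
  integrable_of_continuous_bounded (continuous_partTrace hA V hs) (abs_partTrace_le hA V hs)

lemma integrable_partTrace_mul (hA : Aᵀ = -A) (V W : Finset (Fin N)) {s : ℝ} (hs : 0 < s) :
    Integrable (fun ξ => partTrace A V s ξ * partTrace A W s ξ) (stdG (PairIdx N)) := by
  refine integrable_of_continuous_bounded (K := N / s * (N / s))
    ((continuous_partTrace hA V hs).mul (continuous_partTrace hA W hs)) fun ξ => ?_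
  rw [abs_mul]
  exact mul_le_mul (abs_partTrace_le hA V hs ξ) (abs_partTrace_le hA W hs ξ) (abs_nonneg _)
    (by positivity)

lemma sampleY_zero (h : BipWeights A U b a) (ξ : PairIdx N → ℝ) {i j : Fin N}
    (hij : i ∈ U ↔ j ∈ U) : sampleY A ξ i j = 0 := by
  by_cases e : i = j
  · subst e; exact sampleY_diag A ξ i
  · rw [sampleY_apply A ξ e, h.zero i j hij, zero_mul]

/-- The two partial traces differ by a deterministic amount, since the signature matrix of the
bipartition anticommutes with `Y_A`. -/
lemma partTrace_compl (h : BipWeights A U b a) {s : ℝ} (hs : 0 < s) (ξ : PairIdx N → ℝ) :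
    partTrace A Uᶜ s ξ = partTrace A U s ξ + ((Uᶜ.card : ℝ) - U.card) / s := by
  classical
  set d : Fin N → ℝ := fun i => if i ∈ U then 1 else -1 with hd
  have hJ : diagonal d * sampleY A ξ = -(sampleY A ξ * diagonal d) := by
    ext i j
    rw [diagonal_mul, Matrix.neg_apply, mul_diagonal]
    by_cases hij : i ∈ U ↔ j ∈ U
    · rw [sampleY_zero h ξ hij]; simp
    · by_cases hi : i ∈ U
      · have hj : j ∉ U := fun hj => hij ⟨fun _ => hj, fun _ => hi⟩
        simp [hd, hi, hj]
      · have hj : j ∈ U := by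
          by_contra hj
          exact hij ⟨fun x => absurd x hi, fun x => absurd x hj⟩
        simp [hd, hi, hj]
  have key := trace_signature_resolvent (sampleY_skew h.skew ξ) hJ hs
  have split : ∀ F : Fin N → ℝ, ∑ i, d i * F i = ∑ i ∈ U, F i - ∑ i ∈ Uᶜ, F i := by
    intro F
    rw [← Finset.sum_add_sum_compl U, sub_eq_add_neg, ← Finset.sum_neg_distrib]
    congr 1
    · exact Finset.sum_congr rfl fun i hi => by simp [hd, hi]
    · exact Finset.sum_congr rfl fun i hi => by simp [hd, Finset.mem_compl.1 hi]
  have h1 : (diagonal d * resol A s ξ).trace = partTrace A U s ξ - partTrace A Uᶜ s ξ := by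
    simp only [trace, diag_apply, diagonal_mul]
    exact split _
  have h2 : (diagonal d).trace = (U.card : ℝ) - Uᶜ.card := by
    have := split fun _ => 1
    simpa [trace] using this
  change s * (diagonal d * resol A s ξ).trace = _ at key
  rw [h1, h2] at key
  field_simp
  linarith

/-- The diagonal of `(s + Y) G = 1`, in a row indexed by `U`. -/
lemma resol_row_identity (h : BipWeights A U b a) {s : ℝ} (hs : 0 < s) (ξ : PairIdx N → ℝ)
    {i : Fin N} (hi : i ∈ U) :
    ∑ j ∈ Uᶜ, sampleY A ξ i j * resol A s ξ j i = 1 - s * resol A s ξ i i := by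
  have h1 := congrFun (congrFun (mul_nonsing_inv _ (isUnit_det_sample h.skew hs ξ)) i) i
  rw [Matrix.add_mul, Matrix.add_apply, smul_mul, one_mul, Matrix.smul_apply, one_apply_eq,
    mul_apply, ← Finset.sum_add_sum_compl U, Finset.sum_eq_zero (s := U), zero_add] at h1
  · simp only [resol, smul_eq_mul] at h1 ⊢
    linarith
  · intro j hj
    rw [sampleY_zero h ξ ⟨fun _ => hj, fun _ => hi⟩, zero_mul]

/-- Integration by parts turns the row identities into the exact relation
`|U| - s E T_U = E ∑ A_ij² (G_ii G_jj - G_ji²)`. -/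
lemma stein_identity (h : BipWeights A U b a) {s : ℝ} (hs : 0 < s) :
    (U.card : ℝ) - s * ∫ ξ, partTrace A U s ξ ∂stdG (PairIdx N) =
      ∫ ξ, ∑ i ∈ U, ∑ j ∈ Uᶜ, (A i j) ^ 2 *
        (resol A s ξ i i * resol A s ξ j j - resol A s ξ j i * resol A s ξ j i)
        ∂stdG (PairIdx N) := by
  have hA := h.skew
  have hInt : ∀ i j : Fin N, Integrable (fun ξ => (A i j) ^ 2 *
        (resol A s ξ i i * resol A s ξ j j - resol A s ξ j i * resol A s ξ j i))
        (stdG (PairIdx N)) := fun i j =>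
    ((integrable_resol_mul hA hs i i j j).sub (integrable_resol_mul hA hs j i j i)).const_mul _
  have hY : ∀ i j : Fin N, Integrable (fun ξ => sampleY A ξ i j * resol A s ξ j i)
      (stdG (PairIdx N)) := by
    intro i j
    by_cases e : i = j
    · subst e; simp [sampleY_diag]
    · simp only [sampleY_apply A _ e]
      have h1 : Integrable (fun ξ : PairIdx N → ℝ => ξ (slot i j e)) (stdG (PairIdx N)) :=
        (IsGaussian.integrable_id (μ := stdG (PairIdx N))).eval _
      exact (h1.const_mul _).mul_bdd (c := 1 / s) (continuous_resol hA hs j i).aestronglyMeasurable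
        (ae_of_all _ fun ξ => abs_resol_le hA hs ξ j i)
  rw [integral_finsetSum _ fun i _ => integrable_finsetSum _ fun j _ => hInt i j]
  have hrow : ∀ i ∈ U, ∫ ξ, ∑ j ∈ Uᶜ, (A i j) ^ 2 *
        (resol A s ξ i i * resol A s ξ j j - resol A s ξ j i * resol A s ξ j i)
        ∂stdG (PairIdx N) = 1 - s * ∫ ξ, resol A s ξ i i ∂stdG (PairIdx N) := by
    intro i hi
    have h1 : ∫ ξ, (1 - s * resol A s ξ i i) ∂stdG (PairIdx N) =
        1 - s * ∫ ξ, resol A s ξ i i ∂stdG (PairIdx N) := by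
      rw [integral_sub (integrable_const _) ((integrable_resol hA hs i i).const_mul _),
        integral_const_mul]
      simp
    rw [← h1, integral_finsetSum _ fun j _ => hInt i j]
    simp only [← resol_row_identity h hs _ hi]
    rw [integral_finsetSum _ fun j _ => hY i j]
    refine Finset.sum_congr rfl fun j hj => ?_
    have hij : i ≠ j := fun e => (Finset.mem_compl.1 hj) (e ▸ hi)
    simp only [sampleY_apply A _ hij, mul_assoc]
    rw [integral_const_mul, integral_const_mul, stein_resol hA hs hij, integral_const_mul]
    ring
  rw [Finset.sum_congr rfl hrow, Finset.sum_sub_distrib, ← Finset.mul_sum,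
    ← integral_finsetSum _ fun i _ => integrable_resol hA hs i i]
  simp [partTrace]

/-- The expected partial trace over the smaller side is only of order `√N`. -/
lemma integral_partTrace_sq_le (h : BipWeights A U b a) (hb : 0 < b) {s : ℝ} (hs : 0 < s) :
    (∫ ξ, partTrace A U s ξ ∂stdG (PairIdx N)) ^ 2 ≤ N * (1 + a ^ 2 / s ^ 2) / b ^ 2 := by
  have hA := h.skew
  set c := ∫ ξ, partTrace A U s ξ ∂stdG (PairIdx N) with hc
  have hc0 : 0 ≤ c := integral_nonneg fun ξ => partTrace_nonneg hA U hs ξ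
  -- pointwise lower bound for the integrand of the exact relation
  have hpt : ∀ ξ, b ^ 2 * (partTrace A U s ξ * partTrace A U s ξ) - a ^ 2 * (N / s ^ 2) ≤
      ∑ i ∈ U, ∑ j ∈ Uᶜ, (A i j) ^ 2 *
        (resol A s ξ i i * resol A s ξ j j - resol A s ξ j i * resol A s ξ j i) := by
    intro ξ
    have hd := fun i => resolvent_diag_nonneg (sampleY_skew hA ξ) hs i
    have h1 : b ^ 2 * (partTrace A U s ξ * partTrace A U s ξ) ≤
        ∑ i ∈ U, ∑ j ∈ Uᶜ, (A i j) ^ 2 * (resol A s ξ i i * resol A s ξ j j) := by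
      calc b ^ 2 * (partTrace A U s ξ * partTrace A U s ξ)
          ≤ b ^ 2 * (partTrace A U s ξ * partTrace A Uᶜ s ξ) := by
            refine mul_le_mul_of_nonneg_left (mul_le_mul_of_nonneg_left ?_
              (partTrace_nonneg hA U hs ξ)) (sq_nonneg b)
            rw [partTrace_compl h hs ξ]
            have : (U.card : ℝ) ≤ Uᶜ.card := by exact_mod_cast h.card_le
            have : 0 ≤ ((Uᶜ.card : ℝ) - U.card) / s := div_nonneg (by linarith) hs.le
            linarith
        _ = ∑ i ∈ U, ∑ j ∈ Uᶜ, b ^ 2 * (resol A s ξ i i * resol A s ξ j j) := by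
            simp only [partTrace]
            rw [Finset.sum_mul_sum]
            simp only [Finset.mul_sum]
        _ ≤ _ := Finset.sum_le_sum fun i hi => Finset.sum_le_sum fun j hj =>
            mul_le_mul_of_nonneg_right (h.lower i hi j hj) (mul_nonneg (hd i) (hd j))
    have h2 : ∑ i ∈ U, ∑ j ∈ Uᶜ, (A i j) ^ 2 * (resol A s ξ j i * resol A s ξ j i) ≤
        a ^ 2 * (N / s ^ 2) := by
      calc _ ≤ ∑ i ∈ U, ∑ j ∈ Uᶜ, a ^ 2 * (resol A s ξ j i) ^ 2 :=
            Finset.sum_le_sum fun i _ => Finset.sum_le_sum fun j _ => by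
              rw [← sq]
              exact mul_le_mul_of_nonneg_right (h.upper i j) (sq_nonneg _)
        _ ≤ ∑ i, ∑ j, a ^ 2 * (resol A s ξ j i) ^ 2 := by
            refine (Finset.sum_le_sum fun i _ => Finset.sum_le_sum_of_subset_of_nonneg
              (Finset.subset_univ _) fun j _ _ => by positivity).trans ?_
            exact Finset.sum_le_sum_of_subset_of_nonneg (Finset.subset_univ _)
              fun i _ _ => Finset.sum_nonneg fun j _ => by positivity
        _ = a ^ 2 * ∑ i, ∑ j, (resol A s ξ j i) ^ 2 := by simp only [Finset.mul_sum]
        _ ≤ _ := by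
            refine mul_le_mul_of_nonneg_left ?_ (sq_nonneg a)
            simpa [resol] using resolvent_sq_sum_le (sampleY_skew hA ξ) hs
    simp only [mul_sub, Finset.sum_sub_distrib]
    linarith
  have hI := integrable_partTrace_mul hA U U hs
  have hmono := integral_mono (μ := stdG (PairIdx N))
    (f := fun ξ => b ^ 2 * (partTrace A U s ξ * partTrace A U s ξ) - a ^ 2 * (N / s ^ 2))
    (g := fun ξ => ∑ i ∈ U, ∑ j ∈ Uᶜ, (A i j) ^ 2 *
      (resol A s ξ i i * resol A s ξ j j - resol A s ξ j i * resol A s ξ j i))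
    ((hI.const_mul _).sub (integrable_const _))
    (integrable_finsetSum _ fun i _ => integrable_finsetSum _ fun j _ =>
      ((integrable_resol_mul hA hs i i j j).sub (integrable_resol_mul hA hs j i j i)).const_mul _)
    hpt
  rw [← stein_identity h hs, integral_sub (hI.const_mul _) (integrable_const _),
    integral_const_mul] at hmono
  simp only [integral_const, probReal_univ, one_smul] at hmono
  have hU : (U.card : ℝ) ≤ N := by
    have := Finset.card_le_univ U
    rw [Fintype.card_fin] at this
    exact_mod_cast this
  have hsc : 0 ≤ s * c := mul_nonneg hs.le hc0
  -- Jensen's inequality for the square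
  have hvar : c ^ 2 ≤ ∫ ξ, partTrace A U s ξ * partTrace A U s ξ ∂stdG (PairIdx N) := by
    have h0 : 0 ≤ ∫ ξ, (partTrace A U s ξ * partTrace A U s ξ -
        2 * c * partTrace A U s ξ + c ^ 2) ∂stdG (PairIdx N) :=
      integral_nonneg fun ξ => by
        have := sq_nonneg (partTrace A U s ξ - c)
        simp only [Pi.zero_apply]
        nlinarith
    have hT := integrable_partTrace hA U hs
    have hT' : Integrable (fun ξ => partTrace A U s ξ * partTrace A U s ξ -
        2 * c * partTrace A U s ξ) (stdG (PairIdx N)) := hI.sub (hT.const_mul _)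
    rw [integral_add hT' (integrable_const _),
      integral_sub hI (hT.const_mul _), integral_const_mul] at h0
    simp only [integral_const, probReal_univ, one_smul] at h0
    rw [← hc] at h0
    nlinarith
  rw [le_div_iff₀ (by positivity)]
  have e : a ^ 2 * (N / s ^ 2) = N * (a ^ 2 / s ^ 2) := by ring
  rw [e] at hmono
  have hbb : b ^ 2 * c ^ 2 ≤ b ^ 2 * ∫ ξ, partTrace A U s ξ * partTrace A U s ξ ∂stdG (PairIdx N) :=
    mul_le_mul_of_nonneg_left hvar (sq_nonneg b)
  rw [← hc] at hmono
  nlinarith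

lemma hasDerivAt_logDet_shift (hA : Aᵀ = -A) (U : Finset (Fin N)) {v : ℝ} (hv : 0 < v)
    (ξ : PairIdx N → ℝ) :
    HasDerivAt (fun s => logDet A s ξ) (partTrace A U v ξ + partTrace A Uᶜ v ξ) v := by
  have h1 : ∀ i j : Fin N, HasDerivAt
      (fun s : ℝ => (s • (1 : Matrix (Fin N) (Fin N) ℝ) + sampleY A ξ) i j)
      ((1 : Matrix (Fin N) (Fin N) ℝ) i j) v := by
    intro i j
    simp only [Matrix.add_apply, Matrix.smul_apply, smul_eq_mul]
    simpa using ((hasDerivAt_id' v).mul_const ((1 : Matrix (Fin N) (Fin N) ℝ) i j)).add_const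
      (sampleY A ξ i j)
  refine (hasDerivAt_log_det h1 (isUnit_det_sample hA hv ξ)).congr_deriv ?_
  rw [Matrix.mul_one, partTrace, partTrace, Finset.sum_add_sum_compl]
  rfl

lemma hasDerivAt_integral_logDet (hA : Aᵀ = -A) (ha : ∀ i j, (A i j) ^ 2 ≤ a ^ 2)
    (U : Finset (Fin N)) {v : ℝ} (hv : 0 < v) :
    HasDerivAt (fun s => ∫ ξ, logDet A s ξ ∂stdG (PairIdx N))
      (∫ ξ, (partTrace A U v ξ + partTrace A Uᶜ v ξ) ∂stdG (PairIdx N)) v := by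
  have hpos : ∀ x ∈ Set.Ioi (v / 2), 0 < x := fun x hx => (half_pos hv).trans hx
  refine (hasDerivAt_integral_of_dominated_loc_of_deriv_le (s := Set.Ioi (v / 2))
    (bound := fun _ => N / (v / 2) + N / (v / 2))
    (F' := fun s ξ => partTrace A U s ξ + partTrace A Uᶜ s ξ)
    (Ioi_mem_nhds (half_lt_self hv)) ?_ (logDet_concentration hA ha hv).1 ?_ ?_
    (integrable_const _) ?_).2
  · filter_upwards [Ioi_mem_nhds (half_lt_self hv)] with x hx
    exact (continuous_logDet hA (hpos x hx)).aestronglyMeasurable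
  · exact ((continuous_partTrace hA U hv).add (continuous_partTrace hA Uᶜ hv)).aestronglyMeasurable
  · refine ae_of_all _ fun ξ x hx => ?_
    have hx0 := hpos x hx
    have hb : ∀ V, |partTrace A V x ξ| ≤ N / (v / 2) := fun V =>
      (abs_partTrace_le hA V hx0 ξ).trans
        (div_le_div_of_nonneg_left (Nat.cast_nonneg _) (half_pos hv) (le_of_lt hx))
    exact (abs_add_le _ _).trans (add_le_add (hb _) (hb _))
  · exact ae_of_all _ fun ξ x hx => hasDerivAt_logDet_shift hA U (hpos x hx) ξ

/-- After removal of the contribution of the deterministic kernel, `log det` increases with the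
shift. -/
lemma logDet_mono (h : BipWeights A U b a) {s s' : ℝ} (hs : 0 < s) (hss : s ≤ s')
    (ξ : PairIdx N → ℝ) :
    logDet A s ξ - ((Uᶜ.card : ℝ) - U.card) * Real.log s ≤
      logDet A s' ξ - ((Uᶜ.card : ℝ) - U.card) * Real.log s' := by
  have hd : ∀ v, 0 < v → HasDerivAt
      (fun v => logDet A v ξ - ((Uᶜ.card : ℝ) - U.card) * Real.log v)
      (2 * partTrace A U v ξ) v := by
    intro v hv
    refine ((hasDerivAt_logDet_shift h.skew U hv ξ).sub
      ((Real.hasDerivAt_log hv.ne').const_mul _)).congr_deriv ?_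
    rw [partTrace_compl h hv ξ]
    ring
  have hmono : MonotoneOn (fun v => logDet A v ξ - ((Uᶜ.card : ℝ) - U.card) * Real.log v)
      (Set.Ici s) := by
    refine monotoneOn_of_deriv_nonneg (convex_Ici s)
      (fun v hv => (hd v (hs.trans_le hv)).continuousAt.continuousWithinAt) ?_ ?_
    · intro v hv
      rw [interior_Ici] at hv
      exact (hd v (hs.trans hv)).differentiableAt.differentiableWithinAt
    · intro v hv
      rw [interior_Ici] at hv
      rw [(hd v (hs.trans hv)).deriv]
      exact mul_nonneg zero_le_two (partTrace_nonneg h.skew U (hs.trans hv) ξ)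
  exact hmono Set.self_mem_Ici hss hss

/-- Comparison of the expected `log det` at two shifts, from the `O(√N)` bound on the derivative. -/
lemma integral_logDet_increment (h : BipWeights A U b a) (hb : 0 < b) {s s' : ℝ} (hs : 0 < s)
    (hss : s ≤ s') :
    (∫ ξ, logDet A s' ξ ∂stdG (PairIdx N)) - ((Uᶜ.card : ℝ) - U.card) * Real.log s' -
        ((∫ ξ, logDet A s ξ ∂stdG (PairIdx N)) - ((Uᶜ.card : ℝ) - U.card) * Real.log s) ≤
      2 * Real.sqrt (N * (1 + a ^ 2 / s ^ 2) / b ^ 2) * s' := by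
  set K := Real.sqrt (N * (1 + a ^ 2 / s ^ 2) / b ^ 2) with hK
  set Ψ : ℝ → ℝ := fun v => (∫ ξ, logDet A v ξ ∂stdG (PairIdx N)) -
    ((Uᶜ.card : ℝ) - U.card) * Real.log v - 2 * K * v with hΨ
  have hd : ∀ v, 0 < v → HasDerivAt Ψ
      (2 * (∫ ξ, partTrace A U v ξ ∂stdG (PairIdx N)) - 2 * K) v := by
    intro v hv
    have h1 := (((hasDerivAt_integral_logDet h.skew h.upper U hv).sub
      ((Real.hasDerivAt_log hv.ne').const_mul ((Uᶜ.card : ℝ) - U.card))).sub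
      ((hasDerivAt_id' v).const_mul (2 * K)))
    refine h1.congr_deriv ?_
    simp only [partTrace_compl h hv]
    have hT := integrable_partTrace h.skew U hv
    have hT' : Integrable (fun ξ => partTrace A U v ξ + ((Uᶜ.card : ℝ) - U.card) / v)
        (stdG (PairIdx N)) := hT.add (integrable_const _)
    rw [integral_add hT hT', integral_add hT (integrable_const _)]
    simp only [integral_const, probReal_univ, one_smul]
    ring
  have hanti : AntitoneOn Ψ (Set.Ici s) := by
    refine antitoneOn_of_deriv_nonpos (convex_Ici s)
      (fun v hv => (hd v (hs.trans_le hv)).continuousAt.continuousWithinAt) ?_ ?_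
    · intro v hv
      rw [interior_Ici] at hv
      exact (hd v (hs.trans hv)).differentiableAt.differentiableWithinAt
    · intro v hv
      rw [interior_Ici] at hv
      have hv0 : 0 < v := hs.trans hv
      rw [(hd v hv0).deriv]
      have h1 := Real.le_sqrt_of_sq_le (integral_partTrace_sq_le h hb hv0)
      have h2 : Real.sqrt (N * (1 + a ^ 2 / v ^ 2) / b ^ 2) ≤ K := by
        refine Real.sqrt_le_sqrt ?_
        have : a ^ 2 / v ^ 2 ≤ a ^ 2 / s ^ 2 :=
          div_le_div_of_nonneg_left (sq_nonneg a) (by positivity)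
            (pow_le_pow_left₀ hs.le (le_of_lt hv) 2)
        gcongr
      linarith
  have hfin := hanti Set.self_mem_Ici hss hss
  simp only [hΨ] at hfin
  have : 0 ≤ 2 * K * s := mul_nonneg (mul_nonneg zero_le_two (Real.sqrt_nonneg _)) hs.le
  linarith

/-- The quantitative bound: any auxiliary shift `s' ≥ √t` controls the logarithmic gap. -/
lemma log_gap_le (h : BipWeights A U b a) (hb : 0 < b) {t : ℝ} (ht : 0 < t) {s' : ℝ}
    (hss : Real.sqrt t ≤ s') :
    Real.log (PhiFull A t) - logPhiTilde t A ≤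
      Real.pi ^ 2 * (2 * a ^ 2 * N / s' ^ 2) / 8 +
        2 * Real.sqrt (N * (1 + a ^ 2 / t) / b ^ 2) * s' := by
  set s := Real.sqrt t with hs
  have hs0 : 0 < s := Real.sqrt_pos.2 ht
  have hs'0 : 0 < s' := hs0.trans_le hss
  have hst : s ^ 2 = t := Real.sq_sqrt ht.le
  have hA := h.skew
  set d : ℝ := (Uᶜ.card : ℝ) - U.card with hd
  set μ := stdG (PairIdx N) with hμ
  have hc := logDet_concentration hA h.upper hs0
  have hc' := logDet_concentration hA h.upper hs'0
  have h1 : PhiFull A t ≤ ∫ ξ, Real.exp (logDet A s ξ) ∂μ := by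
    refine (PhiFull_le_integral_det hA ht).trans ?_
    refine (le_abs_self _).trans (abs_integral_le_integral_abs.trans (le_of_eq ?_))
    refine integral_congr_ae (ae_of_all _ fun ξ => ?_)
    exact (Real.exp_log_eq_abs (isUnit_det_sample hA hs0 ξ).ne_zero).symm
  have h2 : ∫ ξ, Real.exp (logDet A s ξ) ∂μ ≤
      ∫ ξ, Real.exp (d * Real.log s - d * Real.log s') * Real.exp (logDet A s' ξ) ∂μ := by
    refine integral_mono hc.2.1 (hc'.2.1.const_mul _) fun ξ => ?_
    rw [← Real.exp_add, Real.exp_le_exp]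
    have := logDet_mono h hs0 hss ξ
    linarith
  rw [integral_const_mul] at h2
  have h3 : PhiFull A t ≤ Real.exp (d * Real.log s - d * Real.log s' +
      (∫ ξ, logDet A s' ξ ∂μ + Real.pi ^ 2 * (2 * a ^ 2 * N / s' ^ 2) / 8)) := by
    rw [Real.exp_add]
    exact h1.trans (h2.trans (mul_le_mul_of_nonneg_left hc'.2.2 (Real.exp_pos _).le))
  have h4 := (Real.log_le_iff_le_exp (PhiFull_pos A ht)).2 h3
  have h5 := integral_logDet_increment h hb hs0 hss
  rw [hst] at h5
  have h6 : logPhiTilde t A = ∫ ξ, logDet A s ξ ∂μ := rfl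
  rw [h6]
  linarith

end Bipartite

/-! ### The limit -/

lemma bipWeights_bipartiteSkew {m n : ℕ} (hmn : m ≤ n) {b a : ℝ}
    {w : Fin m → Fin n → ℝ} (hw : ∀ i j, w i j ∈ Set.Icc (b ^ 2) (a ^ 2)) :
    BipWeights (bipartiteSkew w) (Finset.univ.map (Fin.castAddEmb n)) b a := by
  have hsq : ∀ i j, Real.sqrt (w i j) ^ 2 = w i j := fun i j =>
    Real.sq_sqrt ((sq_nonneg b).trans (hw i j).1)
  have hUl : ∀ i : Fin m, Fin.castAdd n i ∈ Finset.univ.map (Fin.castAddEmb (n := m) n) :=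
    fun i => Finset.mem_map.2 ⟨i, Finset.mem_univ i, rfl⟩
  have hUr : ∀ j : Fin n, Fin.natAdd m j ∉ Finset.univ.map (Fin.castAddEmb (n := m) n) := by
    intro j hj
    obtain ⟨i, _, e⟩ := Finset.mem_map.1 hj
    have := congrArg Fin.val e
    simp at this
    omega
  have hll : ∀ i j : Fin m, bipartiteSkew w (Fin.castAdd n i) (Fin.castAdd n j) = 0 := by
    intro i j; simp [bipartiteSkew]
  have hrr : ∀ i j : Fin n, bipartiteSkew w (Fin.natAdd m i) (Fin.natAdd m j) = 0 := by
    intro i j; simp [bipartiteSkew]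
  have hlr : ∀ (i : Fin m) (j : Fin n),
      bipartiteSkew w (Fin.castAdd n i) (Fin.natAdd m j) = Real.sqrt (w i j) := by
    intro i j; simp [bipartiteSkew]
  have hrl : ∀ (i : Fin m) (j : Fin n),
      bipartiteSkew w (Fin.natAdd m j) (Fin.castAdd n i) = -Real.sqrt (w i j) := by
    intro i j; simp [bipartiteSkew]
  have hcard : (Finset.univ.map (Fin.castAddEmb (n := m) n)).card = m := by simp
  refine ⟨?_, ?_, ?_, ?_, ?_⟩
  · ext i j
    rw [transpose_apply, Matrix.neg_apply]
    refine Fin.addCases (fun i => ?_) (fun i => ?_) i <;>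
      refine Fin.addCases (fun j => ?_) (fun j => ?_) j <;> simp [hll, hrr, hlr, hrl]
  · intro i j
    refine Fin.addCases (fun i => ?_) (fun i => ?_) i <;>
      refine Fin.addCases (fun j => ?_) (fun j => ?_) j
    · exact fun _ => hll i j
    · exact fun h => absurd (h.1 (hUl i)) (hUr j)
    · exact fun h => absurd (h.2 (hUl j)) (hUr i)
    · exact fun _ => hrr i j
  · intro i hi j hj
    obtain ⟨i, _, rfl⟩ := Finset.mem_map.1 hi
    revert hj
    refine Fin.addCases (fun j => ?_) (fun j => ?_) j
    · exact fun hj => absurd (hUl j) (Finset.mem_compl.1 hj)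
    · intro _
      rw [Fin.coe_castAddEmb, hlr, hsq]
      exact (hw i j).1
  · intro i j
    refine Fin.addCases (fun i => ?_) (fun i => ?_) i <;>
      refine Fin.addCases (fun j => ?_) (fun j => ?_) j
    · rw [hll, zero_pow two_ne_zero]; exact sq_nonneg a
    · rw [hlr, hsq]; exact (hw i j).2
    · rw [hrl, neg_sq, hsq]; exact (hw j i).2
    · rw [hrr, zero_pow two_ne_zero]; exact sq_nonneg a
  · rw [Finset.card_compl, hcard, Fintype.card_fin]
    omega

/-- for fixed `0 < b ≤ a` and `t > 0`,
`lim_{n→∞} sup_{m ≤ n} sup_{ω : weights in [b²,a²]}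
  (1/(m+n)) (log Φ(t, A(ω)) - log Φ̃(t, A(ω))) = 0`
(the quantity being nonnegative by Jensen's inequality). -/
theorem bipartite_log_gap_tendsto_zero
    (b a : ℝ) (hb : 0 < b) (hba : b ≤ a) (t : ℝ) (ht : 0 < t) :
    ∀ ε : ℝ, 0 < ε → ∃ n₀ : ℕ, ∀ n : ℕ, n₀ ≤ n → ∀ m : ℕ, m ≤ n →
      ∀ w : Fin m → Fin n → ℝ, (∀ i j, w i j ∈ Set.Icc (b ^ 2) (a ^ 2)) →
        (1 / ((m : ℝ) + n)) *
            (Real.log (PhiFull (bipartiteSkew w) t) -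
              logPhiTilde t (bipartiteSkew w)) < ε := by
  intro ε hε
  -- `C N` bounds the squared expected partial trace; `δ` is chosen so that `2 √(δ C) = ε / 2`
  set C : ℝ := (1 + a ^ 2 / t) / b ^ 2 with hC
  have hC0 : 0 < C := by positivity
  set δ : ℝ := (ε / 4) ^ 2 / C with hδ
  have hδ0 : 0 < δ := by positivity
  obtain ⟨k, hk⟩ := exists_nat_gt (max (t / δ) (Real.pi ^ 2 * a ^ 2 / (2 * δ * ε)))
  refine ⟨k + 1, fun n hn m hmn w hw => ?_⟩
  have hkn : (k : ℝ) < n := by exact_mod_cast hn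
  have hn0 : 0 < (n : ℝ) := lt_of_le_of_lt (Nat.cast_nonneg k) hkn
  have hn1 : t < δ * n := by
    have := (le_max_left _ _).trans_lt (hk.trans hkn)
    rwa [div_lt_iff₀ hδ0, mul_comm] at this
  have hn2 : Real.pi ^ 2 * a ^ 2 < n * (2 * δ * ε) := by
    have := (le_max_right _ _).trans_lt (hk.trans hkn)
    rwa [div_lt_iff₀ (by positivity)] at this
  have key := log_gap_le (bipWeights_bipartiteSkew hmn hw) hb ht
    (Real.sqrt_le_sqrt hn1.le)
  rw [Real.sq_sqrt (by positivity)] at key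
  push_cast at key
  set N : ℝ := (m : ℝ) + n with hN
  have hnN : (n : ℝ) ≤ N := by simp [hN]
  have hN0 : 0 < N := hn0.trans_le hnN
  have hroot : Real.sqrt (N * (1 + a ^ 2 / t) / b ^ 2) * Real.sqrt (δ * n) ≤ ε / 4 * N := by
    rw [← Real.sqrt_mul (by positivity)]
    refine Real.sqrt_le_iff.2 ⟨by positivity, ?_⟩
    have e : N * (1 + a ^ 2 / t) / b ^ 2 * (δ * n) = (ε / 4) ^ 2 * (N * n) := by
      rw [mul_div_assoc, ← hC, hδ]
      field_simp
    rw [e, mul_pow]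
    refine mul_le_mul_of_nonneg_left ?_ (by positivity)
    rw [sq]
    exact mul_le_mul_of_nonneg_left hnN hN0.le
  have hfirst : Real.pi ^ 2 * (2 * a ^ 2 * N / (δ * n)) / 8 < ε / 2 * N := by
    have e : Real.pi ^ 2 * (2 * a ^ 2 * N / (δ * n)) / 8 =
        Real.pi ^ 2 * a ^ 2 / (4 * (δ * n)) * N := by
      field_simp
      ring
    rw [e]
    refine mul_lt_mul_of_pos_right ?_ hN0
    rw [div_lt_iff₀ (by positivity)]
    linarith
  rw [one_div, inv_mul_lt_iff₀ hN0]
  linarith
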